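/- arXiv:2409.15485 — 7 statements merged into one kernel-verified Lean document; each statement's English description precedes it below -/
import Mathlib

section
/- Let Q be a Borel probability measure on ℝ such that the pushforward of Q under the reflection 𝔯(s) = -s equals the measure Q with density s ↦ e^{-s} (i.e. (𝔯_*Q)(A) = ∫_A e^{-s} dQ(s) for all Borel A). Then for every Borel set B ⊆ ℝ that is nonempty and bounded above, Q(B) ≤ e^{sup B} · Q(-B), where -B = {-s : s ∈ B}. -/
open MeasureTheory Set

open scoped ENNReal

section WithDensity

variable {α : Type*} [MeasurableSpace α] {μ : Measure α} {s : Set α}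

theorem mul_measure_le_withDensity_apply {f : α → ℝ≥0∞} (hf : AEMeasurable f μ)
    {c : ℝ≥0∞} (hc : ∀ x ∈ s, c ≤ f x) : c * μ s ≤ μ.withDensity f s :=
  calc c * μ s = ∫⁻ _ in s, c ∂μ := (setLIntegral_const s c).symm
    _ ≤ ∫⁻ x in s, f x ∂μ := setLIntegral_mono_ae hf.restrict (ae_of_all μ hc)
    _ ≤ μ.withDensity f s := withDensity_apply_le f s

theorem measure_le_exp_mul_withDensity_exp_neg {σ : α → ℝ} (hσ : AEMeasurable σ μ)
    {a : ℝ} (ha : ∀ x ∈ s, σ x ≤ a) :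
    μ s ≤ ENNReal.ofReal (Real.exp a) *
      μ.withDensity (fun x ↦ ENNReal.ofReal (Real.exp (-σ x))) s := by
  have exp_neg_le : ∀ x ∈ s, (ENNReal.ofReal (Real.exp a))⁻¹ ≤
      ENNReal.ofReal (Real.exp (-σ x)) := fun x hx ↦ by
    rw [← ENNReal.ofReal_inv_of_pos (Real.exp_pos a), ← Real.exp_neg]
    gcongr
    exact ha x hx
  rw [← ENNReal.inv_mul_le_iff (ENNReal.ofReal_pos.mpr (Real.exp_pos a)).ne' ENNReal.ofReal_ne_top]
  exact mul_measure_le_withDensity_apply hσ.neg.exp.ennreal_ofReal exp_neg_le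

end WithDensity

theorem fluctuation_relation_set_inequality_general (Q : Measure ℝ)
    (hfluct : Measure.map (fun s : ℝ => -s) Q =
      Q.withDensity (fun s : ℝ => ENNReal.ofReal (Real.exp (-s))))
    {B : Set ℝ} {a : ℝ} (ha : a ∈ upperBounds B) :
    Q B ≤ ENNReal.ofReal (Real.exp a) * Q (-B) :=
  calc Q B ≤ ENNReal.ofReal (Real.exp a) *
        Q.withDensity (fun s ↦ ENNReal.ofReal (Real.exp (-s))) B :=
        measure_le_exp_mul_withDensity_exp_neg aemeasurable_id fun _ hs ↦ ha hs
    _ = ENNReal.ofReal (Real.exp a) * Measure.map (fun s ↦ -s) Q B := by rw [hfluct]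
    _ = ENNReal.ofReal (Real.exp a) * Q (-B) :=
        congrArg _ ((MeasurableEquiv.neg ℝ).map_apply B)

/-- If a Borel probability measure `Q` on `ℝ` satisfies the finite-time fluctuation relation
`𝔯_* Q = e^{-s} dQ` (with `𝔯(s) = -s`), then for every nonempty Borel set `B` that is
bounded above, `Q(B) ≤ e^{sup B} · Q(-B)`. -/
theorem fluctuation_relation_set_inequality
    (Q : Measure ℝ) [IsProbabilityMeasure Q]
    (hfluct : Measure.map (fun s : ℝ => -s) Q =
      Q.withDensity (fun s : ℝ => ENNReal.ofReal (Real.exp (-s))))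
    (B : Set ℝ) (hB : MeasurableSet B) (hne : B.Nonempty) (hbdd : BddAbove B) :
    Q B ≤ ENNReal.ofReal (Real.exp (sSup B)) * Q (-B) :=
  fluctuation_relation_set_inequality_general Q hfluct (isLUB_csSup hne hbdd).1
end

section
/- Assume (Cl1), (Cl2) and (Cl3). Then for every t ∈ ℝ the entropy balance equation holds: Ent(ω_t|ω) = -∫_0^t ( ∫_X σ(φ^s(x)) dω(x) ) ds, i.e. ∫_X log(dω_t/dω) dω_t = ∫_0^t ω_s(σ) ds, where ω_s(σ) = ∫_X σ dω_s = ∫_X σ(φ^s(x)) dω(x). -/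
open MeasureTheory Filter Set intervalIntegral

/-- The cocycle `c^t = log (dω_t/dω) ∘ φ^t`, where `ω_t = (φ^t)_* ω`. -/
noncomputable def flowCocycle {X : Type*} [MeasurableSpace X]
    (φ : ℝ → X → X) (ω : Measure X) (t : ℝ) (x : X) : ℝ :=
  Real.log (((Measure.map (φ t) ω).rnDeriv ω (φ t x)).toReal)

/-!
Let `ω_t` be the pushforward of `ω` under `φ^t` and `F t = ∫ c^t dω`, which is also
`∫ log (dω_t/dω) dω_t`. The chain rule for Radon–Nikodym derivatives makes `c` a cocycle,
`c^{s+t} = c^t + c^s ∘ φ^t`, so `F (s + t) = F t + ω_t (c^s)`. Since `ω_t ≪ ω`, the state `ω_t` is a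
bounded functional on `L^∞(ω)`, so differentiability of `c` at `0` in `L^∞` propagates: the
derivative of `F` at every `t` is `ω_t (σ)`. This derivative is bounded, hence integrable, and
`F 0 = 0`, so the fundamental theorem of calculus gives `F t = ∫ ω_s (σ) ds`.
-/

open scoped ENNReal

section IntegralOnLpTop

variable {α E : Type*} [MeasurableSpace α] [NormedAddCommGroup E] {μ ν : Measure α}

lemma memLp_top_of_absolutelyContinuous {f : α → E} (hf : MemLp f ∞ μ) (hνμ : ν ≪ μ) :
    MemLp f ∞ ν := by
  refine ⟨hf.1.mono_ac hνμ, ?_⟩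
  simpa only [eLpNorm_exponent_top] using (eLpNormEssSup_mono_measure f hνμ).trans_lt hf.2

lemma integrable_of_memLp_top_of_absolutelyContinuous [IsFiniteMeasure ν] {f : α → E}
    (hf : MemLp f ∞ μ) (hνμ : ν ≪ μ) : Integrable f ν :=
  (memLp_top_of_absolutelyContinuous hf hνμ).integrable le_top

lemma ae_norm_le_eLpNorm_top {f : α → E} (hf : MemLp f ∞ μ) :
    ∀ᵐ x ∂μ, ‖f x‖ ≤ (eLpNorm f ∞ μ).toReal := by
  filter_upwards [ae_le_eLpNormEssSup (f := f) (μ := μ)] with x hx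
  rw [← toReal_enorm]
  exact ENNReal.toReal_mono hf.eLpNorm_ne_top hx

variable [NormedSpace ℝ E]

lemma norm_integral_le_eLpNorm_top_mul [IsFiniteMeasure ν] (hνμ : ν ≪ μ) {f : α → E}
    (hf : MemLp f ∞ μ) : ‖∫ x, f x ∂ν‖ ≤ (eLpNorm f ∞ μ).toReal * ν.real univ :=
  norm_integral_le_of_norm_le_const (hνμ.ae_le (ae_norm_le_eLpNorm_top hf))

/-- A finite measure `ν ≪ μ` as a bounded functional on `L^∞(μ)`: absolute continuity is what makes
`∫ f ∂ν` independent of the representative of the `μ`-class of `f`. -/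
noncomputable def integralLpTopCLM [IsFiniteMeasure ν] (hνμ : ν ≪ μ) : Lp E ∞ μ →L[ℝ] E :=
  LinearMap.mkContinuous
    { toFun := fun f ↦ ∫ x, f x ∂ν
      map_add' := fun f g ↦ by
        rw [integral_congr_ae (hνμ.ae_le (Lp.coeFn_add f g))]
        exact integral_add
          (integrable_of_memLp_top_of_absolutelyContinuous (Lp.memLp f) hνμ)
          (integrable_of_memLp_top_of_absolutelyContinuous (Lp.memLp g) hνμ)
      map_smul' := fun r f ↦ by
        rw [integral_congr_ae (hνμ.ae_le (Lp.coeFn_smul r f))]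
        exact integral_smul r f }
    (ν.real univ) fun f ↦
      (norm_integral_le_eLpNorm_top_mul hνμ (Lp.memLp f)).trans_eq (mul_comm _ _)

lemma integralLpTopCLM_toLp [IsFiniteMeasure ν] (hνμ : ν ≪ μ) {f : α → E} (hf : MemLp f ∞ μ) :
    integralLpTopCLM hνμ hf.toLp = ∫ x, f x ∂ν :=
  integral_congr_ae (hνμ.ae_le hf.coeFn_toLp)

lemma hasDerivAt_integral_of_hasDerivAt_toLp_top [IsFiniteMeasure ν] (hνμ : ν ≪ μ)
    {f : ℝ → α → E} {f' : α → E} {a : ℝ} (hf : ∀ s, MemLp (f s) ∞ μ) (hf' : MemLp f' ∞ μ)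
    (h : HasDerivAt (fun s ↦ (hf s).toLp) hf'.toLp a) :
    HasDerivAt (fun s ↦ ∫ x, f s x ∂ν) (∫ x, f' x ∂ν) a := by
  have := (integralLpTopCLM hνμ).hasFDerivAt.comp_hasDerivAt a h
  simpa only [Function.comp_def, integralLpTopCLM_toLp] using this

end IntegralOnLpTop

lemma hasDerivAt_toLp_of_ae_eq_continuousMap {α E : Type*} [TopologicalSpace α] [CompactSpace α]
    [MeasurableSpace α] [BorelSpace α] [NormedAddCommGroup E] [NormedSpace ℝ E]
    [SecondCountableTopologyEither α E] {p : ℝ≥0∞} [Fact (1 ≤ p)] {μ : Measure α}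
    [IsFiniteMeasure μ] {f : ℝ → α → E} {g : ℝ → C(α, E)} {g' : C(α, E)} {a : ℝ}
    (hf : ∀ s, MemLp (f s) p μ) (hfg : ∀ s, f s =ᵐ[μ] g s) (hg : HasDerivAt g g' a) :
    HasDerivAt (fun s ↦ (hf s).toLp) (g'.memLp μ ℝ).toLp a := by
  have toLp_eq {u : α → E} {v : C(α, E)} (hu : MemLp u p μ) (huv : u =ᵐ[μ] v) :
      ContinuousMap.toLp p μ ℝ v = hu.toLp :=
    Lp.ext ((ContinuousMap.coeFn_toLp μ v).trans (huv.symm.trans hu.coeFn_toLp.symm))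
  have := (ContinuousMap.toLp p μ ℝ (E := E)).hasFDerivAt.comp_hasDerivAt a hg
  simpa only [Function.comp_def, toLp_eq (hf _) (hfg _), toLp_eq (g'.memLp μ ℝ) .rfl] using this

theorem integral_eq_sub_of_hasDerivAt_of_norm_le {E : Type*} [NormedAddCommGroup E]
    [NormedSpace ℝ E] [CompleteSpace E] {f f' : ℝ → E} {a b M : ℝ}
    (hf : ∀ s ∈ uIcc a b, HasDerivAt f (f' s) s) (hM : ∀ s ∈ uIcc a b, ‖f' s‖ ≤ M) :
    ∫ s in a..b, f' s = f b - f a := by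
  have hmeas : AEStronglyMeasurable f' (volume.restrict (uIoc a b)) :=
    (aestronglyMeasurable_deriv f _).congr <|
      (ae_restrict_mem measurableSet_uIoc).mono fun s hs ↦ (hf s (uIoc_subset_uIcc hs)).deriv
  have hbound : (fun s ↦ ‖f' s‖) ≤ᵐ[volume.restrict (uIoc a b)] fun _ ↦ M :=
    (ae_restrict_mem measurableSet_uIoc).mono fun s hs ↦ hM s (uIoc_subset_uIcc hs)
  exact integral_eq_sub_of_hasDerivAt hf (intervalIntegrable_const.mono_fun' hmeas hbound)

lemma llr_map_ae_eq_add {α β : Type*} [MeasurableSpace α] [MeasurableSpace β] {μ ν : Measure α}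
    {ρ : Measure β} [SigmaFinite μ] [SigmaFinite ν] [SigmaFinite ρ] {g : α → β}
    (hg : MeasurableEmbedding g) (hμν : μ ≪ ν) (hνρ : ν.map g ≪ ρ) :
    ∀ᵐ y ∂μ, llr (μ.map g) ρ (g y) = llr μ ν y + llr (ν.map g) ρ (g y) := by
  have := hg.sigmaFinite_map (μ := μ)
  have := hg.sigmaFinite_map (μ := ν)
  have hchain : ∀ᵐ y ∂ν, (μ.map g).rnDeriv ρ (g y) =
      μ.rnDeriv ν y * (ν.map g).rnDeriv ρ (g y) := by
    filter_upwards [hg.rnDeriv_map μ ν,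
      ae_of_ae_map hg.measurable.aemeasurable (Measure.rnDeriv_mul_rnDeriv' (μ := μ.map g) hνρ)]
      with y hmap hmul
    rw [← hmul, Pi.mul_apply, hmap]
  have hne : ∀ᵐ y ∂ν, ((ν.map g).rnDeriv ρ (g y)).toReal ≠ 0 := by
    filter_upwards [ae_of_ae_map hg.measurable.aemeasurable (Measure.rnDeriv_pos hνρ),
      ae_of_ae_map hg.measurable.aemeasurable (hνρ.ae_le (Measure.rnDeriv_ne_top (ν.map g) ρ))]
      with y hpos hfin
    exact (ENNReal.toReal_pos hpos.ne' hfin).ne'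
  filter_upwards [hμν.ae_le hchain, hμν.ae_le hne, Measure.rnDeriv_pos hμν,
    hμν.ae_le (Measure.rnDeriv_ne_top μ ν)] with y hchain hne hpos hfin
  rw [llr, llr, llr, hchain, ENNReal.toReal_mul,
    Real.log_mul (ENNReal.toReal_pos hpos.ne' hfin).ne' hne]

section Flow

variable {X : Type*} [MeasurableSpace X] {φ : ℝ → X → X} {ω : Measure X}

lemma measurableEmbedding_of_flow (hzero : ∀ x, φ 0 x = x)
    (hgroup : ∀ t s x, φ (t + s) x = φ t (φ s x)) (hφ : ∀ t, Measurable (φ t)) (t : ℝ) :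
    MeasurableEmbedding (φ t) :=
  MeasurableEquiv.measurableEmbedding
    { toFun := φ t
      invFun := φ (-t)
      left_inv := fun x ↦ by rw [← hgroup, neg_add_cancel, hzero]
      right_inv := fun x ↦ by rw [← hgroup, add_neg_cancel, hzero]
      measurable_toFun := hφ t
      measurable_invFun := hφ (-t) }

lemma map_flow_add (hgroup : ∀ t s x, φ (t + s) x = φ t (φ s x)) (hφ : ∀ t, Measurable (φ t))
    (s t : ℝ) : ω.map (φ (s + t)) = (ω.map (φ t)).map (φ s) := by
  rw [Measure.map_map (hφ s) (hφ t)]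
  exact congrArg ω.map (funext (hgroup s t))

lemma flowCocycle_zero_ae_eq [SigmaFinite ω] (hzero : ∀ x, φ 0 x = x) :
    flowCocycle φ ω 0 =ᵐ[ω] 0 := by
  have hφ0 : φ 0 = id := funext hzero
  filter_upwards [llr_self ω] with x hx
  rwa [flowCocycle, hφ0, Measure.map_id]

lemma integral_flowCocycle {t : ℝ} (ht : Measurable (φ t)) :
    ∫ x, flowCocycle φ ω t x ∂ω = ∫ y, llr (ω.map (φ t)) ω y ∂(ω.map (φ t)) :=
  (integral_map ht.aemeasurable (stronglyMeasurable_llr _ _).aestronglyMeasurable).symm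

lemma flowCocycle_add_ae_eq [SigmaFinite ω] (hzero : ∀ x, φ 0 x = x)
    (hgroup : ∀ t s x, φ (t + s) x = φ t (φ s x))
    (hφ : ∀ t, Measure.QuasiMeasurePreserving (φ t) ω ω) (s t : ℝ) :
    ∀ᵐ x ∂ω, flowCocycle φ ω (s + t) x = flowCocycle φ ω t x + flowCocycle φ ω s (φ t x) := by
  have hm t := (hφ t).measurable
  have hemb := measurableEmbedding_of_flow hzero hgroup hm
  have := (hemb t).sigmaFinite_map (μ := ω)
  have hllr := ae_of_ae_map (hm t).aemeasurable <| llr_map_ae_eq_add (hemb s)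
    (hφ t).absolutelyContinuous (hφ s).absolutelyContinuous
  filter_upwards [hllr] with x hx
  rw [← map_flow_add hgroup hm, ← hgroup] at hx
  simpa only [flowCocycle, llr, ← hgroup] using hx

variable [IsFiniteMeasure ω]

lemma integral_flowCocycle_add (hzero : ∀ x, φ 0 x = x)
    (hgroup : ∀ t s x, φ (t + s) x = φ t (φ s x))
    (hφ : ∀ t, Measure.QuasiMeasurePreserving (φ t) ω ω)
    (hc : ∀ t, MemLp (flowCocycle φ ω t) ∞ ω) (s t : ℝ) :
    ∫ x, flowCocycle φ ω (s + t) x ∂ω =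
      ∫ x, flowCocycle φ ω t x ∂ω + ∫ y, flowCocycle φ ω s y ∂(ω.map (φ t)) := by
  have hint : Integrable (flowCocycle φ ω s) (ω.map (φ t)) :=
    integrable_of_memLp_top_of_absolutelyContinuous (hc s) (hφ t).absolutelyContinuous
  have hm := (hφ t).aemeasurable
  rw [integral_map hm hint.1, integral_congr_ae (flowCocycle_add_ae_eq hzero hgroup hφ s t)]
  exact integral_add ((hc t).integrable le_top) (hint.comp_aemeasurable hm)

lemma hasDerivAt_integral_flowCocycle (hzero : ∀ x, φ 0 x = x)
    (hgroup : ∀ t s x, φ (t + s) x = φ t (φ s x))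
    (hφ : ∀ t, Measure.QuasiMeasurePreserving (φ t) ω ω)
    (hc : ∀ t, MemLp (flowCocycle φ ω t) ∞ ω) {σ : X → ℝ} (hσ : MemLp σ ∞ ω)
    (hderiv : HasDerivAt (fun t ↦ (hc t).toLp) hσ.toLp 0) (t : ℝ) :
    HasDerivAt (fun s ↦ ∫ x, flowCocycle φ ω s x ∂ω) (∫ y, σ y ∂(ω.map (φ t))) t := by
  have hsplit (s : ℝ) : ∫ x, flowCocycle φ ω s x ∂ω =
      ∫ x, flowCocycle φ ω t x ∂ω + ∫ y, flowCocycle φ ω (s - t) y ∂(ω.map (φ t)) := by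
    simpa only [sub_add_cancel] using integral_flowCocycle_add hzero hgroup hφ hc (s - t) t
  have h0 := hasDerivAt_integral_of_hasDerivAt_toLp_top (hφ t).absolutelyContinuous hc hσ hderiv
  rw [← sub_self t] at h0
  exact ((h0.comp_sub_const t t).const_add _).congr_of_eventuallyEq (.of_forall hsplit)

theorem entropy_balance_equation_general (hzero : ∀ x, φ 0 x = x)
    (hgroup : ∀ t s x, φ (t + s) x = φ t (φ s x))
    (hφ : ∀ t, Measure.QuasiMeasurePreserving (φ t) ω ω)
    (hc : ∀ t, MemLp (flowCocycle φ ω t) ∞ ω) {σ : X → ℝ} (hσ : MemLp σ ∞ ω)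
    (hderiv : HasDerivAt (fun t ↦ (hc t).toLp) hσ.toLp 0) (t : ℝ) :
    ∫ y, llr (ω.map (φ t)) ω y ∂(ω.map (φ t)) = ∫ s in (0 : ℝ)..t, ∫ x, σ (φ s x) ∂ω := by
  have hpush (s : ℝ) : ∫ y, σ y ∂(ω.map (φ s)) = ∫ x, σ (φ s x) ∂ω :=
    integral_map (hφ s).aemeasurable (hσ.1.mono_ac (hφ s).absolutelyContinuous)
  have hbound (s : ℝ) :
      ‖∫ y, σ y ∂(ω.map (φ s))‖ ≤ (eLpNorm σ ∞ ω).toReal * ω.real univ := by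
    have hmass : (ω.map (φ s)).real univ = ω.real univ := by
      rw [map_measureReal_apply (hφ s).measurable .univ, preimage_univ]
    exact hmass ▸ norm_integral_le_eLpNorm_top_mul (hφ s).absolutelyContinuous hσ
  have hstart : ∫ x, flowCocycle φ ω 0 x ∂ω = 0 :=
    integral_eq_zero_of_ae (flowCocycle_zero_ae_eq hzero)
  have hFTC := integral_eq_sub_of_hasDerivAt_of_norm_le (a := 0) (b := t)
    (fun s _ ↦ hasDerivAt_integral_flowCocycle hzero hgroup hφ hc hσ hderiv s)
    (fun s _ ↦ hbound s)
  simp only [hpush] at hFTC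
  rw [hFTC, hstart, sub_zero, integral_flowCocycle (hφ t).measurable]

end Flow

/-- Entropy balance equation: under (Cl1)–(Cl3),
`Ent(ω_t|ω) = -∫_0^t ω_s(σ) ds`, i.e. `∫ log(dω_t/dω) dω_t = ∫_0^t (∫ σ∘φ^s dω) ds`.
Here (Cl2)–(Cl3) are encoded by the continuous versions `C t` of `c^t` together with the
differentiability at `0`, in sup norm, of `t ↦ C t` with derivative the entropy production
observable `σ`. -/
theorem entropy_balance_equation
    {X : Type*} [MetricSpace X] [CompactSpace X] [MeasurableSpace X] [BorelSpace X]
    (φ : ℝ → X → X)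
    (hcont : Continuous fun p : ℝ × X => φ p.1 p.2)
    (hzero : ∀ x, φ 0 x = x)
    (hgroup : ∀ t s : ℝ, ∀ x, φ (t + s) x = φ t (φ s x))
    (ω : Measure X) [IsProbabilityMeasure ω]
    (hCl1 : ∀ t : ℝ, ω ≪ Measure.map (φ t) ω ∧ Measure.map (φ t) ω ≪ ω)
    (C : ℝ → C(X, ℝ))
    (hCl2 : ∀ t : ℝ, flowCocycle φ ω t =ᵐ[ω] ⇑(C t))
    (σ : C(X, ℝ))
    (hCl3 : HasDerivAt C σ 0) :
    ∀ t : ℝ,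
      ∫ y, Real.log (((Measure.map (φ t) ω).rnDeriv ω y).toReal) ∂(Measure.map (φ t) ω) =
        ∫ s in (0:ℝ)..t, ∫ x, σ (φ s x) ∂ω := by
  have hc t : MemLp (flowCocycle φ ω t) ∞ ω := (memLp_congr_ae (hCl2 t)).2 ((C t).memLp ω ℝ)
  exact entropy_balance_equation_general hzero hgroup
    (fun t ↦ ⟨Continuous.measurable (by fun_prop), (hCl1 t).2⟩) hc (σ.memLp ω ℝ)
    (hasDerivAt_toLp_of_ae_eq_continuousMap hc hCl2 hCl3)
end

section
/- Assume (Cl1), (Cl2) and (Cl3). Then ∫_X σ dω = 0, i.e. the reference state expectation of the entropy production observable vanishes. -/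
/-!
The mean `ω(c^t)` of the cocycle is the Kullback–Leibler divergence of `ω_t` from `ω`. It is
nonnegative and vanishes at `t = 0`, so it has a minimum there and its derivative at `0` is zero.
This derivative is `ω(σ)`, since the embedding `C(X) → L¹(ω)` and the integral on `L¹(ω)` are
continuous and linear.
-/

open MeasureTheory Filter Set

open InformationTheory

theorem hasDerivAt_integral_of_hasDerivAt_L1 {α E : Type*} [MeasurableSpace α] {μ : Measure α}
    [NormedAddCommGroup E] [NormedSpace ℝ E] [CompleteSpace E]
    {F : ℝ → α →₁[μ] E} {F' : α →₁[μ] E} {t : ℝ} (hF : HasDerivAt F F' t) :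
    HasDerivAt (fun s ↦ ∫ a, F s a ∂μ) (∫ a, F' a ∂μ) t := by
  simp only [← L1.integral_eq_integral, L1.integral_eq]
  exact L1.integralCLM.hasFDerivAt.comp_hasDerivAt t hF

theorem integral_flowCocycle_eq_toReal_klDiv {X : Type*} [MeasurableSpace X] {φ : ℝ → X → X}
    {ω : Measure X} [IsFiniteMeasure ω] {t : ℝ} (hφ : AEMeasurable (φ t) ω)
    (hac : ω.map (φ t) ≪ ω) :
    ∫ x, flowCocycle φ ω t x ∂ω = (klDiv (ω.map (φ t)) ω).toReal := by
  have hmass : ω.map (φ t) univ = ω univ := by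
    rw [Measure.map_apply_of_aemeasurable hφ .univ, preimage_univ]
  calc ∫ x, flowCocycle φ ω t x ∂ω
      = ∫ y, llr (ω.map (φ t)) ω y ∂(ω.map (φ t)) :=
        (integral_map hφ (measurable_llr _ _).aestronglyMeasurable).symm
    _ = (klDiv (ω.map (φ t)) ω).toReal := (toReal_klDiv_of_measure_eq hac hmass).symm

theorem entropy_production_mean_zero_general {X : Type*} [MeasurableSpace X] {φ : ℝ → X → X}
    {ω : Measure X} [IsFiniteMeasure ω] (hφ : ∀ t, AEMeasurable (φ t) ω)
    (hzero : ω.map (φ 0) = ω) (hac : ∀ t, ω.map (φ t) ≪ ω)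
    {C : ℝ → X →₁[ω] ℝ} (hC : ∀ t, flowCocycle φ ω t =ᵐ[ω] C t)
    {σ : X →₁[ω] ℝ} (hσ : HasDerivAt C σ 0) :
    ∫ x, σ x ∂ω = 0 := by
  have hmean (t : ℝ) : ∫ x, C t x ∂ω = (klDiv (ω.map (φ t)) ω).toReal := by
    rw [← integral_congr_ae (hC t), integral_flowCocycle_eq_toReal_klDiv (hφ t) (hac t)]
  have hmin : IsLocalMin (fun t ↦ ∫ x, C t x ∂ω) 0 := .of_forall fun t ↦ by
    simp only [hmean, hzero, klDiv_self, ENNReal.toReal_zero, ENNReal.toReal_nonneg]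
  exact hmin.hasDerivAt_eq_zero (hasDerivAt_integral_of_hasDerivAt_L1 hσ)

/-- Under (Cl1)–(Cl3), the reference state expectation of the entropy production
observable vanishes: `ω(σ) = 0`. -/
theorem entropy_production_mean_zero
    {X : Type*} [MetricSpace X] [CompactSpace X] [MeasurableSpace X] [BorelSpace X]
    (φ : ℝ → X → X)
    (hcont : Continuous fun p : ℝ × X => φ p.1 p.2)
    (hzero : ∀ x, φ 0 x = x)
    (hgroup : ∀ t s : ℝ, ∀ x, φ (t + s) x = φ t (φ s x))
    (ω : Measure X) [IsProbabilityMeasure ω]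
    (hCl1 : ∀ t : ℝ, ω ≪ Measure.map (φ t) ω ∧ Measure.map (φ t) ω ≪ ω)
    (C : ℝ → C(X, ℝ))
    (hCl2 : ∀ t : ℝ, flowCocycle φ ω t =ᵐ[ω] ⇑(C t))
    (σ : C(X, ℝ))
    (hCl3 : HasDerivAt C σ 0) :
    ∫ x, σ x ∂ω = 0 := by
  have hφ (t : ℝ) : AEMeasurable (φ t) ω := (hcont.comp (.prodMk_right t)).aemeasurable
  have hid : φ 0 = id := funext hzero
  let toL1 : C(X, ℝ) →L[ℝ] X →₁[ω] ℝ := ContinuousMap.toLp 1 ω ℝ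
  have htoL1 (f : C(X, ℝ)) : toL1 f =ᵐ[ω] f := ContinuousMap.coeFn_toLp ω f
  rw [← integral_congr_ae (htoL1 σ)]
  exact entropy_production_mean_zero_general hφ (by rw [hid, Measure.map_id])
    (fun t ↦ (hCl1 t).2) (fun t ↦ (hCl2 t).trans (htoL1 (C t)).symm)
    (toL1.hasFDerivAt.comp_hasDerivAt 0 hCl3)
end

section
/- Assume (Cl1) and that (X,φ,ω) is TRI with time-reversal ι. Then: (1) for every t ∈ ℝ, the equality c^t ∘ ι = c^{-t} holds ω-almost everywhere; (2) if moreover (Cl2) and (Cl3) hold and ω has full support (every nonempty open subset of X has positive ω-measure), then c^t ∘ ι = c^{-t} everywhere on X for every t, and σ ∘ ι = -σ. -/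
open MeasureTheory Filter Set

/-!
A time-reversal `ι` preserving `ω` carries `ω_{-t}` to `ω_t`, because `ι ∘ φ^{-t} = φ^t ∘ ι`. As
`ι` is invertible, the density of `ω_t` with respect to `ω`, composed with `ι`, is therefore the
density of `ω_{-t}`, off an `ω`-null set. Since `ω_{-t} ≪ ω`, that set is also `ω_{-t}`-null, so the
identity may be pulled back along `φ^{-t}`, and its logarithm is `c^t ∘ ι = c^{-t}`. Full support
makes this an identity between continuous versions, and differentiating at `t = 0` gives
`σ ∘ ι = -σ`.
-/

section Cocycle

variable {X Y : Type*} [MeasurableSpace X] [MeasurableSpace Y]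

theorem rnDeriv_comp_ae_eq_of_measurePreserving {ι : X → Y} (hι : MeasurableEmbedding ι)
    {μ ν : Measure X} {μ' ν' : Measure Y} [SigmaFinite μ] [SigmaFinite ν]
    (hμ : MeasurePreserving ι μ μ') (hν : MeasurePreserving ι ν ν') :
    μ'.rnDeriv ν' ∘ ι =ᵐ[ν] μ.rnDeriv ν := by
  rw [← hμ.map_eq, ← hν.map_eq]
  exact hι.rnDeriv_map μ ν

theorem flowCocycle_comp_ae_eq_of_semiconj {φ : ℝ → X → X} {ψ : ℝ → Y → Y} {μ : Measure X}
    {ν : Measure Y} {ι : X → Y} {s t : ℝ} [SigmaFinite (μ.map (φ s))] (hφ : Measurable (φ s))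
    (hψ : Measurable (ψ t)) (hac : μ.map (φ s) ≪ μ) (hι : MeasurableEmbedding ι)
    (hμν : MeasurePreserving ι μ ν) (hsemi : Function.Semiconj ι (φ s) (ψ t)) :
    flowCocycle ψ ν t ∘ ι =ᵐ[μ] flowCocycle φ μ s := by
  have : SigmaFinite μ := .of_map μ hφ.aemeasurable inferInstance
  have hmap : MeasurePreserving ι (μ.map (φ s)) (ν.map (ψ t)) := by
    refine .map_of_comp ?_ hι.measurable hφ
    rw [hsemi.comp_eq]
    exact (hψ.measurePreserving ν).comp hμν
  have hdensity : (ν.map (ψ t)).rnDeriv ν ∘ ι =ᵐ[μ] (μ.map (φ s)).rnDeriv μ :=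
    rnDeriv_comp_ae_eq_of_measurePreserving hι hmap hμν
  filter_upwards [ae_of_ae_map hφ.aemeasurable (hac.ae_eq hdensity)] with x hx
  simp only [flowCocycle, Function.comp_apply, ← hx, hsemi x]

end Cocycle

theorem comp_eq_of_ae_eq_of_continuous {X Y Z : Type*} [TopologicalSpace X] [MeasurableSpace X]
    [TopologicalSpace Y] [MeasurableSpace Y] [TopologicalSpace Z] [T2Space Z] {μ : Measure X}
    [μ.IsOpenPosMeasure] {ν : Measure Y} {ι : X → Y} (hι : Measure.QuasiMeasurePreserving ι μ ν)
    (hιcont : Continuous ι) {f F : Y → Z} {g G : X → Z} (hfF : f =ᵐ[ν] F) (hgG : g =ᵐ[μ] G)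
    (hF : Continuous F) (hG : Continuous G) (hfg : f ∘ ι =ᵐ[μ] g) : F ∘ ι = G := by
  have hae : F ∘ ι =ᵐ[μ] G := (hι.ae_eq_comp hfF).symm.trans (hfg.trans hgG)
  exact ((hF.comp hιcont).ae_eq_iff_eq μ hG).1 hae

section Derivative

variable {𝕜 E : Type*} [NontriviallyNormedField 𝕜] [NormedAddCommGroup E] [NormedSpace 𝕜 E]

theorem eq_neg_of_hasDerivAt_of_eq_comp_neg {f g : 𝕜 → E} {f' g' : E} {x : 𝕜}
    (hf : HasDerivAt f f' x) (hg : HasDerivAt g g' (-x)) (hfg : ∀ s, f s = g (-s)) : f' = -g' := by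
  have hgneg : HasDerivAt (fun s => g (-s)) (-g') x := by
    simpa only [zero_sub] using HasDerivAt.comp_const_sub 0 x (by rwa [zero_sub])
  exact hf.unique (funext hfg ▸ hgneg)

theorem hasDerivAt_continuousMap_apply {X : Type*} [TopologicalSpace X] [CompactSpace X]
    {C : 𝕜 → C(X, E)} {C' : C(X, E)} {t : 𝕜} (hC : HasDerivAt C C' t) (x : X) :
    HasDerivAt (fun s => C s x) (C' x) t :=
  (ContinuousMap.evalCLM 𝕜 x : C(X, E) →L[𝕜] E).hasFDerivAt.comp_hasDerivAt t hC

end Derivative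

theorem time_reversal_cocycle_general
    {X : Type*} [TopologicalSpace X] [MeasurableSpace X] (φ : ℝ → X → X)
    (hφ : ∀ t, Measurable (φ t)) (ω : Measure X) [∀ t, SigmaFinite (ω.map (φ t))]
    (hac : ∀ t, ω.map (φ t) ≪ ω) (ι : X → X) (hιcont : Continuous ι)
    (hι : MeasurableEmbedding ι) (hιφ : ∀ t x, ι (φ t x) = φ (-t) (ι x)) (hTRI : ω.map ι = ω) :
    (∀ t, flowCocycle φ ω t ∘ ι =ᵐ[ω] flowCocycle φ ω (-t)) ∧
    (∀ C : ℝ → X → ℝ, (∀ t, Continuous (C t)) → (∀ t, flowCocycle φ ω t =ᵐ[ω] C t) →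
      ∀ σ : X → ℝ, (∀ x, HasDerivAt (fun t => C t x) (σ x) 0) → ω.IsOpenPosMeasure →
        (∀ t x, C t (ι x) = C (-t) x) ∧ ∀ x, σ (ι x) = -σ x) := by
  have hpres : MeasurePreserving ι ω ω := ⟨hι.measurable, hTRI⟩
  have hcocycle : ∀ t, flowCocycle φ ω t ∘ ι =ᵐ[ω] flowCocycle φ ω (-t) := fun t =>
    flowCocycle_comp_ae_eq_of_semiconj (hφ (-t)) (hφ t) (hac (-t)) hι hpres
      fun x => by rw [hιφ, neg_neg]
  refine ⟨hcocycle, fun C hCcont hC σ hσ _ => ?_⟩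
  have hreversal : ∀ t x, C t (ι x) = C (-t) x := fun t => congrFun <|
    comp_eq_of_ae_eq_of_continuous hpres.quasiMeasurePreserving hιcont (hC t) (hC (-t))
      (hCcont t) (hCcont (-t)) (hcocycle t)
  refine ⟨hreversal, fun x => ?_⟩
  exact eq_neg_of_hasDerivAt_of_eq_comp_neg (hσ (ι x)) (by simpa only [neg_zero] using hσ x)
    fun t => hreversal t x

/-- Under (Cl1) and time-reversal invariance with time-reversal `ι`:
(1) `c^t ∘ ι = c^{-t}` holds `ω`-a.e.;
(2) if moreover (Cl2) and (Cl3) hold (continuous versions `C t` of `c^t`, differentiable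
at `0` with derivative `σ`) and `ω` has full support, then `C t ∘ ι = C (-t)` everywhere
and `σ ∘ ι = -σ`. -/
theorem time_reversal_cocycle
    {X : Type*} [MetricSpace X] [CompactSpace X] [MeasurableSpace X] [BorelSpace X]
    (φ : ℝ → X → X)
    (hcont : Continuous fun p : ℝ × X => φ p.1 p.2)
    (hzero : ∀ x, φ 0 x = x)
    (hgroup : ∀ t s : ℝ, ∀ x, φ (t + s) x = φ t (φ s x))
    (ω : Measure X) [IsProbabilityMeasure ω]
    (hCl1 : ∀ t : ℝ, ω ≪ Measure.map (φ t) ω ∧ Measure.map (φ t) ω ≪ ω)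
    (ι : X → X)
    (hιcont : Continuous ι)
    (hιinv : ∀ x, ι (ι x) = x)
    (hιφ : ∀ t : ℝ, ∀ x, ι (φ t x) = φ (-t) (ι x))
    (hTRI : Measure.map ι ω = ω) :
    -- (1) `c^t ∘ ι = c^{-t}` `ω`-a.e.
    (∀ t : ℝ, (fun x => flowCocycle φ ω t (ι x)) =ᵐ[ω] flowCocycle φ ω (-t)) ∧
    -- (2) under (Cl2)–(Cl3) and full support, the identities hold everywhere
    (∀ C : ℝ → C(X, ℝ), (∀ t : ℝ, flowCocycle φ ω t =ᵐ[ω] ⇑(C t)) →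
      ∀ σ : C(X, ℝ), HasDerivAt C σ 0 →
        (∀ U : Set X, IsOpen U → U.Nonempty → 0 < ω U) →
          (∀ t : ℝ, ∀ x, C t (ι x) = C (-t) x) ∧ (∀ x, σ (ι x) = -σ x)) := by
  have hgeneral := time_reversal_cocycle_general φ (fun t => by fun_prop) ω
    (fun t => (hCl1 t).2) ι hιcont
    (MeasurableEquiv.ofInvolutive ι hιinv hιcont.measurable).measurableEmbedding hιφ hTRI
  exact ⟨hgeneral.1, fun C hC σ hσ hpos => hgeneral.2 (fun t => C t) (fun t => (C t).continuous)
    hC σ (hasDerivAt_continuousMap_apply hσ)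
    ⟨fun U hU hne => (hpos U hU hne).ne'⟩⟩
end

section
/- Assume (Cl1) and that (X,φ,ω) is TRI. Then for every t ∈ ℝ and every α ∈ ℂ, ∫_X e^{-α c^t} dω = conjugate( ∫_X e^{-(1-ᾱ) c^t} dω ), i.e. 𝔉_{ω,t}(α) = conj(𝔉_{ω,t}(1-ᾱ)), where 𝔉_{ω,t}(α) := ∫_X e^{-α c^t(x)} dω(x). -/
open MeasureTheory Filter Set

/-!
The law of `-c^t` under `ω` is that of the log-likelihood ratio `log (dω/dω_t)` under `ω_t`, so
`𝔉_{ω,t}(α)` is the Rényi-type integral `∫ (dω/dω_t)^α dω_t`. A change of measure exchanges `ω` with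
`ω_t` and `α` with `1 - α` in this integral. Time reversal exchanges `ω` and `ω_t` back: `φ^t ∘ ι`
is an involution, and it pushes `ω` to `ω_t` because `ι` preserves `ω`. Hence
`𝔉_{ω,t}(α) = 𝔉_{ω,t}(1 - α)`, and the complex conjugates only reflect that `c^t` is real.
-/

section

open ProbabilityTheory

variable {X Y : Type*} [MeasurableSpace X] [MeasurableSpace Y]

theorem conj_complexMGF (f : X → ℝ) (μ : Measure X) (z : ℂ) :
    starRingEnd ℂ (complexMGF f μ z) = complexMGF f μ (starRingEnd ℂ z) := by
  simp only [complexMGF, ← integral_conj, ← Complex.exp_conj, map_mul, Complex.conj_ofReal]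

theorem complexMGF_llr_swap {μ ν : Measure X} [SigmaFinite μ] [SigmaFinite ν]
    (hμν : μ ≪ ν) (hνμ : ν ≪ μ) (z : ℂ) :
    complexMGF (llr μ ν) ν z = complexMGF (llr ν μ) μ (1 - z) := by
  rw [complexMGF, complexMGF, ← integral_rnDeriv_smul hνμ]
  refine integral_congr_ae ?_
  filter_upwards [exp_llr_of_ac' ν μ hμν, neg_llr hμν] with x hexp hneg
  have hllr : llr μ ν x = -llr ν μ x := neg_eq_iff_eq_neg.mp hneg
  rw [← hexp, hllr, Complex.real_smul, Complex.ofReal_exp, ← Complex.exp_add]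
  congr 1
  push_cast
  ring

theorem identDistrib_llr_map {e : X → Y} (he : MeasurableEmbedding e)
    (μ ν : Measure X) [SigmaFinite μ] [SigmaFinite ν] :
    IdentDistrib (llr (μ.map e) (ν.map e)) (llr μ ν) (ν.map e) ν := by
  have hcomp : llr (μ.map e) (ν.map e) ∘ e =ᵐ[ν] llr μ ν := by
    filter_upwards [he.rnDeriv_map μ ν] with x hx
    simp only [Function.comp_apply, llr, hx]
  refine ⟨(measurable_llr _ _).aemeasurable, (measurable_llr _ _).aemeasurable, ?_⟩
  rw [Measure.map_map (measurable_llr _ _) he.measurable, Measure.map_congr hcomp]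

theorem map_map_of_involutive {e : X → X} (he : Measurable e) (hinv : Function.Involutive e)
    (μ : Measure X) : (μ.map e).map e = μ := by
  rw [Measure.map_map he he, hinv.comp_self, Measure.map_id]

theorem map_absolutelyContinuous_of_involutive {e : X → X} (he : Measurable e)
    (hinv : Function.Involutive e) {μ : Measure X} (hac : μ ≪ μ.map e) : μ.map e ≪ μ := by
  simpa only [map_map_of_involutive he hinv] using hac.map he

theorem complexMGF_llr_map_one_sub {e : X → X} (he : Measurable e)
    (hinv : Function.Involutive e) {μ : Measure X} [SigmaFinite μ] (hac : μ ≪ μ.map e) (z : ℂ) :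
    complexMGF (llr μ (μ.map e)) (μ.map e) (1 - z) =
      complexMGF (llr μ (μ.map e)) (μ.map e) z := by
  have hemb : MeasurableEmbedding e := (MeasurableEquiv.ofInvolutive e hinv he).measurableEmbedding
  have : SigmaFinite (μ.map e) := hemb.sigmaFinite_map
  have hreverse : IdentDistrib (llr μ (μ.map e)) (llr (μ.map e) μ) (μ.map e) μ := by
    simpa only [map_map_of_involutive he hinv] using identDistrib_llr_map hemb (μ.map e) μ
  calc complexMGF (llr μ (μ.map e)) (μ.map e) (1 - z)
      = complexMGF (llr (μ.map e) μ) μ (1 - z) := by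
        rw [complexMGF_congr_identDistrib hreverse]
    _ = complexMGF (llr μ (μ.map e)) (μ.map e) z :=
        (complexMGF_llr_swap hac (map_absolutelyContinuous_of_involutive he hinv hac) z).symm

theorem identDistrib_neg_flowCocycle {φ : ℝ → X → X} {ω : Measure X} {t : ℝ}
    (hφ : Measurable (φ t)) [SigmaFinite ω] [SigmaFinite (ω.map (φ t))]
    (hac : ω.map (φ t) ≪ ω) :
    IdentDistrib (-flowCocycle φ ω t) (llr ω (ω.map (φ t))) ω (ω.map (φ t)) := by
  have hllr : Measurable (-llr (ω.map (φ t)) ω) := (measurable_llr _ _).neg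
  have hlaw : IdentDistrib (-flowCocycle φ ω t) (-llr (ω.map (φ t)) ω) ω (ω.map (φ t)) :=
    ⟨(hllr.comp hφ).aemeasurable, hllr.aemeasurable, (Measure.map_map hllr hφ).symm⟩
  exact hlaw.trans (.of_ae_eq hllr.aemeasurable (neg_llr hac))

theorem integral_cexp_neg_mul_flowCocycle {φ : ℝ → X → X} {ω : Measure X} {t : ℝ}
    (hφ : Measurable (φ t)) [SigmaFinite ω] [SigmaFinite (ω.map (φ t))]
    (hac : ω.map (φ t) ≪ ω) (α : ℂ) :
    ∫ x, Complex.exp (-α * (flowCocycle φ ω t x : ℂ)) ∂ω =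
      complexMGF (llr ω (ω.map (φ t))) (ω.map (φ t)) α := by
  rw [← complexMGF_congr_identDistrib (identDistrib_neg_flowCocycle hφ hac)]
  simp only [complexMGF, Pi.neg_apply, Complex.ofReal_neg, mul_neg, neg_mul]

theorem finite_time_ES_symmetry_general
    (φ : ℝ → X → X) (hφ : ∀ t, Measurable (φ t)) (hφinv : ∀ t x, φ t (φ (-t) x) = x)
    (ω : Measure X) [SigmaFinite ω] (hac : ∀ t, ω ≪ ω.map (φ t))
    (ι : X → X) (hι : MeasurePreserving ι ω ω) (hιinv : Function.Involutive ι)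
    (hιφ : ∀ t x, ι (φ t x) = φ (-t) (ι x)) (t : ℝ) (α : ℂ) :
    ∫ x, Complex.exp (-α * (flowCocycle φ ω t x : ℂ)) ∂ω =
      starRingEnd ℂ
        (∫ x, Complex.exp (-(1 - starRingEnd ℂ α) * (flowCocycle φ ω t x : ℂ)) ∂ω) := by
  have he : Measurable (φ t ∘ ι) := (hφ t).comp hι.measurable
  have hinv : Function.Involutive (φ t ∘ ι) := fun x => by
    simp only [Function.comp_apply, hιφ, hιinv x, hφinv]
  have hmap : ω.map (φ t ∘ ι) = ω.map (φ t) := by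
    rw [← Measure.map_map (hφ t) hι.measurable, hι.map_eq]
  have hact : ω ≪ ω.map (φ t ∘ ι) := hmap ▸ hac t
  have hac' : ω.map (φ t) ≪ ω := hmap ▸ map_absolutelyContinuous_of_involutive he hinv hact
  have : SigmaFinite (ω.map (φ t)) :=
    hmap ▸ (MeasurableEquiv.ofInvolutive _ hinv he).sigmaFinite_map
  rw [integral_cexp_neg_mul_flowCocycle (hφ t) hac', integral_cexp_neg_mul_flowCocycle (hφ t) hac',
    conj_complexMGF, map_sub, map_one, Complex.conj_conj, ← hmap,
    complexMGF_llr_map_one_sub he hinv hact]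

end

/-- Under (Cl1) and time-reversal invariance, the moment generating function
`𝔉_{ω,t}(α) = ∫ e^{-α c^t} dω` satisfies the finite-time symmetry
`𝔉_{ω,t}(α) = conj (𝔉_{ω,t}(1 - ᾱ))` for all `t ∈ ℝ` and `α ∈ ℂ`. -/
theorem finite_time_ES_symmetry
    {X : Type*} [MetricSpace X] [CompactSpace X] [MeasurableSpace X] [BorelSpace X]
    (φ : ℝ → X → X)
    (hcont : Continuous fun p : ℝ × X => φ p.1 p.2)
    (hzero : ∀ x, φ 0 x = x)
    (hgroup : ∀ t s : ℝ, ∀ x, φ (t + s) x = φ t (φ s x))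
    (ω : Measure X) [IsProbabilityMeasure ω]
    (hCl1 : ∀ t : ℝ, ω ≪ Measure.map (φ t) ω ∧ Measure.map (φ t) ω ≪ ω)
    (ι : X → X)
    (hιcont : Continuous ι)
    (hιinv : ∀ x, ι (ι x) = x)
    (hιφ : ∀ t : ℝ, ∀ x, ι (φ t x) = φ (-t) (ι x))
    (hTRI : Measure.map ι ω = ω) :
    ∀ (t : ℝ) (α : ℂ),
      ∫ x, Complex.exp (-α * (flowCocycle φ ω t x : ℂ)) ∂ω =
        starRingEnd ℂ
          (∫ x, Complex.exp (-(1 - starRingEnd ℂ α) * (flowCocycle φ ω t x : ℂ)) ∂ω) := by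
  have hφ (t : ℝ) : Measurable (φ t) := (hcont.comp (Continuous.prodMk_right t)).measurable
  exact finite_time_ES_symmetry_general φ hφ (fun t x => by rw [← hgroup, add_neg_cancel, hzero])
    ω (fun t => (hCl1 t).1) ι ⟨hιcont.measurable, hTRI⟩ hιinv hιφ
end

section
/- Assume (Cl1) and that (X,φ,ω) is TRI. For t ∈ ℝ let Q_{ω,t} be the law of c^t under ω, i.e. the pushforward of ω under the (ω-a.e. defined, measurable) map c^t : X → ℝ. Then for every t, the pushforward of Q_{ω,t} under the reflection 𝔯(s) = -s equals the measure with density s ↦ e^{-s} with respect to Q_{ω,t}: (𝔯_* Q_{ω,t})(A) = ∫_A e^{-s} dQ_{ω,t}(s) for all Borel A ⊆ ℝ. In particular Q_{ω,t} and 𝔯_* Q_{ω,t} are mutually absolutely continuous. -/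
/-!
Time reversal turns `φ^t` into the involution `τ = ι ∘ φ^t`, and since `ι` preserves `ω`, the
cocycle is `c^t = log (dω / d(τ_* ω))`. Exchanging `ω` and `τ_* ω` flips the sign of this logarithm,
and so does composing it with `τ`. Hence `-c^t = c^t ∘ τ` has under `ω` the law of `c^t` under
`τ_* ω = e^{-c^t} ω`, which is the law of `c^t` under `ω` reweighted by `e^{-s}`.
-/

open MeasureTheory Filter Set

section Pushforward

variable {α β : Type*} [MeasurableSpace α] [MeasurableSpace β] {μ ν : Measure α}

theorem map_withDensity_comp {f : α → β} (hf : Measurable f) {g : β → ENNReal}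
    (hg : Measurable g) : (μ.withDensity (g ∘ f)).map f = (μ.map f).withDensity g := by
  ext s hs
  rw [Measure.map_apply hf hs, withDensity_apply _ (hf hs), withDensity_apply _ hs,
    setLIntegral_map hs hg hf]
  rfl

theorem absolutelyContinuous_map_comp_of_map_eq {ρ : Measure β} {f : α → β} {g : β → β}
    (hf : Measurable f) (hg : Measurable g) (hρ : ρ.map g = ρ) (hac : μ.map f ≪ ρ) :
    μ.map (g ∘ f) ≪ ρ := by
  simpa only [Measure.map_map hg hf, hρ] using hac.map hg

theorem map_neg_map_of_comp_ae_eq_neg [Neg β] [MeasurableNeg β] {τ : α → α} {g : α → β}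
    {f : β → ENNReal} (hm : Measurable τ) (hg : Measurable g) (hf : Measurable f)
    (hodd : g ∘ τ =ᵐ[μ] -g)
    (hdens : μ.map τ = μ.withDensity (f ∘ g)) :
    (μ.map g).map (fun s ↦ -s) = (μ.map g).withDensity f :=
  calc (μ.map g).map (fun s ↦ -s)
      = μ.map (-g) := Measure.map_map measurable_neg hg
    _ = μ.map (g ∘ τ) := Measure.map_congr hodd.symm
    _ = (μ.map τ).map g := (Measure.map_map hg hm).symm
    _ = (μ.withDensity (f ∘ g)).map g := by rw [hdens]
    _ = (μ.map g).withDensity f := map_withDensity_comp hg hf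

theorem llr_map_ae_eq [SigmaFinite μ] [SigmaFinite ν] {f : α → β} (hf : MeasurableEmbedding f) :
    llr (μ.map f) (ν.map f) ∘ f =ᵐ[ν] llr μ ν := by
  filter_upwards [hf.rnDeriv_map μ ν] with x hx
  simp only [Function.comp_apply, llr, hx]

theorem withDensity_exp_neg_llr [SigmaFinite μ] [SigmaFinite ν] (hμν : μ ≪ ν) (hνμ : ν ≪ μ) :
    μ.withDensity (fun x ↦ ENNReal.ofReal (Real.exp (-llr μ ν x))) = ν := by
  have hexp : (fun x ↦ ENNReal.ofReal (Real.exp (-llr μ ν x))) =ᵐ[μ] ν.rnDeriv μ := by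
    filter_upwards [exp_neg_llr hμν, ν.rnDeriv_ne_top μ] with x hx hfin
    rw [hx, ENNReal.ofReal_toReal hfin]
  rw [withDensity_congr_ae hexp, Measure.withDensity_rnDeriv_eq ν μ hνμ]

end Pushforward

section Involution

variable {X : Type*} [MeasurableSpace X] {ω : Measure X} {τ : X → X}

theorem measurableEmbedding_of_involutive (hτ : Function.Involutive τ) (hm : Measurable τ) :
    MeasurableEmbedding τ :=
  (MeasurableEquiv.ofInvolutive τ hτ hm).measurableEmbedding

theorem map_map_of_involutive_s8 (hτ : Function.Involutive τ) (hm : Measurable τ) :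
    (ω.map τ).map τ = ω := by
  rw [Measure.map_map hm hm, hτ.comp_self, Measure.map_id]

theorem absolutelyContinuous_map_of_involutive (hτ : Function.Involutive τ) (hm : Measurable τ)
    (hac : ω.map τ ≪ ω) : ω ≪ ω.map τ := by
  simpa only [map_map_of_involutive_s8 hτ hm] using hac.map hm

theorem llr_map_comp_ae_eq_neg_of_involutive [SigmaFinite ω] (hτ : Function.Involutive τ)
    (hm : Measurable τ) (hac : ω.map τ ≪ ω) :
    llr ω (ω.map τ) ∘ τ =ᵐ[ω] -llr ω (ω.map τ) := by
  have hemb := measurableEmbedding_of_involutive hτ hm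
  have : SigmaFinite (ω.map τ) := hemb.sigmaFinite_map
  calc llr ω (ω.map τ) ∘ τ
      = llr ((ω.map τ).map τ) (ω.map τ) ∘ τ := by rw [map_map_of_involutive_s8 hτ hm]
    _ =ᵐ[ω] llr (ω.map τ) ω := llr_map_ae_eq hemb
    _ =ᵐ[ω] -llr ω (ω.map τ) :=
        (neg_llr (absolutelyContinuous_map_of_involutive hτ hm hac)).symm

theorem map_neg_map_llr_of_involutive [SigmaFinite ω] (hτ : Function.Involutive τ)
    (hm : Measurable τ) (hac : ω.map τ ≪ ω) :
    (ω.map (llr ω (ω.map τ))).map (fun s ↦ -s) =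
      (ω.map (llr ω (ω.map τ))).withDensity (fun s ↦ ENNReal.ofReal (Real.exp (-s))) := by
  have : SigmaFinite (ω.map τ) := (measurableEmbedding_of_involutive hτ hm).sigmaFinite_map
  have hdens := withDensity_exp_neg_llr (absolutelyContinuous_map_of_involutive hτ hm hac) hac
  exact map_neg_map_of_comp_ae_eq_neg hm (measurable_llr _ _) (by fun_prop)
    (llr_map_comp_ae_eq_neg_of_involutive hτ hm hac) hdens.symm

end Involution

section TimeReversal

variable {X : Type*}

theorem involutive_timeReversal_comp_flow {G : Type*} [AddGroup G] {φ : G → X → X} {ι : X → X}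
    (hzero : ∀ x, φ 0 x = x) (hadd : ∀ t s x, φ (t + s) x = φ t (φ s x))
    (hι : Function.Involutive ι) (hιφ : ∀ t x, ι (φ t x) = φ (-t) (ι x)) (t : G) :
    Function.Involutive (ι ∘ φ t) := fun x ↦ by
  simp only [Function.comp_apply]
  rw [hιφ, hι, ← hadd, neg_add_cancel, hzero]

variable [MeasurableSpace X] {ω : Measure X} {T ι : X → X}

theorem llr_map_comp_ae_eq_llr_map_timeReversal [SigmaFinite ω] (hT : Measurable T)
    (hι : MeasurableEmbedding ι) (hιT : Function.Involutive (ι ∘ T)) (hιω : ω.map ι = ω)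
    (hac : ω.map T ≪ ω) :
    llr (ω.map T) ω ∘ T =ᵐ[ω] llr ω (ω.map (ι ∘ T)) := by
  have hm : Measurable (ι ∘ T) := hι.measurable.comp hT
  have hemb := measurableEmbedding_of_involutive hιT hm
  have hmap : (ω.map T).map ι = ω.map (ι ∘ T) := Measure.map_map hι.measurable hT
  have hσ : SigmaFinite (ω.map (ι ∘ T)) := hemb.sigmaFinite_map
  have : SigmaFinite (ω.map T) := .of_map _ hι.measurable.aemeasurable (hmap ▸ hσ)
  have hιinvariant : llr (ω.map (ι ∘ T)) ω ∘ ι =ᵐ[ω] llr (ω.map T) ω := by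
    simpa only [hmap, hιω] using llr_map_ae_eq (μ := ω.map T) (ν := ω) hι
  have hexchange : llr (ω.map (ι ∘ T)) ω ∘ (ι ∘ T) =ᵐ[ω.map (ι ∘ T)] llr ω (ω.map (ι ∘ T)) := by
    simpa only [map_map_of_involutive_s8 hιT hm] using
      llr_map_ae_eq (μ := ω) (ν := ω.map (ι ∘ T)) hemb
  calc llr (ω.map T) ω ∘ T
      =ᵐ[ω] llr (ω.map (ι ∘ T)) ω ∘ (ι ∘ T) :=
        ae_eq_comp hT.aemeasurable (hac.ae_le hιinvariant.symm)
    _ =ᵐ[ω] llr ω (ω.map (ι ∘ T)) :=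
        (absolutelyContinuous_map_of_involutive hιT hm
          (absolutelyContinuous_map_comp_of_map_eq hT hι.measurable hιω hac)).ae_le hexchange

theorem finite_time_ES_fluctuation_relation_general [SigmaFinite ω] {φ : ℝ → X → X} {t : ℝ}
    (hφ : Measurable (φ t)) (hι : MeasurableEmbedding ι) (hιφ : Function.Involutive (ι ∘ φ t))
    (hιω : ω.map ι = ω) (hac : ω.map (φ t) ≪ ω) :
    (ω.map (flowCocycle φ ω t)).map (fun s ↦ -s) =
        (ω.map (flowCocycle φ ω t)).withDensity (fun s ↦ ENNReal.ofReal (Real.exp (-s))) ∧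
      ω.map (flowCocycle φ ω t) ≪ (ω.map (flowCocycle φ ω t)).map (fun s ↦ -s) ∧
      (ω.map (flowCocycle φ ω t)).map (fun s ↦ -s) ≪ ω.map (flowCocycle φ ω t) := by
  have hlaw : ω.map (flowCocycle φ ω t) = ω.map (llr ω (ω.map (ι ∘ φ t))) :=
    Measure.map_congr (llr_map_comp_ae_eq_llr_map_timeReversal hφ hι hιφ hιω hac)
  have hrelation := map_neg_map_llr_of_involutive hιφ (hι.measurable.comp hφ)
    (absolutelyContinuous_map_comp_of_map_eq hφ hι.measurable hιω hac)
  rw [hlaw, hrelation]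
  refine ⟨rfl, withDensity_absolutelyContinuous' (by fun_prop) (.of_forall fun s ↦ ?_),
    withDensity_absolutelyContinuous _ _⟩
  exact (ENNReal.ofReal_pos.2 (Real.exp_pos _)).ne'

end TimeReversal

/-- Finite-time classical Evans–Searles fluctuation relation: under (Cl1) and
time-reversal invariance, the law `Q_{ω,t}` of `c^t` under `ω` satisfies
`𝔯_* Q_{ω,t} = e^{-s} dQ_{ω,t}` (with `𝔯(s) = -s`); in particular `Q_{ω,t}` and
`𝔯_* Q_{ω,t}` are mutually absolutely continuous. -/
theorem finite_time_ES_fluctuation_relation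
    {X : Type*} [MetricSpace X] [CompactSpace X] [MeasurableSpace X] [BorelSpace X]
    (φ : ℝ → X → X)
    (hcont : Continuous fun p : ℝ × X => φ p.1 p.2)
    (hzero : ∀ x, φ 0 x = x)
    (hgroup : ∀ t s : ℝ, ∀ x, φ (t + s) x = φ t (φ s x))
    (ω : Measure X) [IsProbabilityMeasure ω]
    (hCl1 : ∀ t : ℝ, ω ≪ Measure.map (φ t) ω ∧ Measure.map (φ t) ω ≪ ω)
    (ι : X → X)
    (hιcont : Continuous ι)
    (hιinv : ∀ x, ι (ι x) = x)
    (hιφ : ∀ t : ℝ, ∀ x, ι (φ t x) = φ (-t) (ι x))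
    (hTRI : Measure.map ι ω = ω) :
    ∀ t : ℝ,
      Measure.map (fun s : ℝ => -s) (Measure.map (flowCocycle φ ω t) ω) =
          (Measure.map (flowCocycle φ ω t) ω).withDensity
            (fun s : ℝ => ENNReal.ofReal (Real.exp (-s))) ∧
      (Measure.map (flowCocycle φ ω t) ω ≪
          Measure.map (fun s : ℝ => -s) (Measure.map (flowCocycle φ ω t) ω) ∧
        Measure.map (fun s : ℝ => -s) (Measure.map (flowCocycle φ ω t) ω) ≪
          Measure.map (flowCocycle φ ω t) ω) := by
  intro t
  exact finite_time_ES_fluctuation_relation_general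
    (hcont.comp (Continuous.prodMk_right t)).measurable
    (measurableEmbedding_of_involutive hιinv hιcont.measurable)
    (involutive_timeReversal_comp_flow hzero hgroup hιinv hιφ t) hTRI (hCl1 t).2
end

section
/- Let m, M > 0 and let g : [0,∞) → ℂ be continuous with |g(t)| ≤ M e^{mt} for all t ≥ 0. Define f(z) := -i ∫_0^∞ e^{izt} g(t) dt for Im z > m. Let 𝔯 ∈ ℂ, N ≥ 1 an integer, and μ > 0, and suppose: (i) f extends to a function, still denoted f, which is analytic on {z : Im z > -μ} \ {𝔯} and has a pole of order N at 𝔯 (i.e. z ↦ (z-𝔯)^N f(z) extends analytically across 𝔯 with nonzero value at 𝔯); (ii) for some r > 0 and for j = 0, 1, sup_{y > -μ} ∫_{|x| > r} |f^{(j)}(x+iy)|^{2-j} dx < ∞, where f^{(0)} = f and f^{(1)} = f' is the complex derivative. Then for every γ with max(-Im 𝔯, 0) < γ < μ there exist a polynomial p of degree N-1 with p(0) equal to the residue of f at 𝔯 (the coefficient of (z-𝔯)^{-1} in the Laurent expansion of f at 𝔯) and a constant C ≥ 0 such that |g(t) - e^{-it𝔯} p(t)| ≤ C e^{-γ t} for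 all t ≥ 1. In particular, if N = 1 then p is the constant equal to the residue of f at 𝔯. -/
open MeasureTheory Filter Set
open scoped ENNReal

/-!
Expand `F = H + P` with `P` the polar part at `𝔯` and `H` holomorphic on `{Im z > -μ}`. The polar
part is the transform of an explicit function `e^{-it𝔯} p(t)`, so `H` continues the transform of the
remainder `h(t) = g(t) - e^{-it𝔯} p(t)`. Multiplication by `t` turns transforms into derivatives:
`t h(t)` has transform `-i H'`. Far from `𝔯` both `F'` and `P'` are integrable along horizontal
lines, uniformly in the height, hence so is `H'`. Fourier inversion for `t h(t)` on a line with
large `Im z`, followed by moving the line down to `Im z = -γ`, gives `t ‖h(t)‖ ≤ C e^{-γt}`.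
-/

section

open Asymptotics Complex
open scoped Nat Real Topology FourierTransform

variable {E : Type*} [NormedAddCommGroup E] [NormedSpace ℂ E]

theorem isOpen_lt_im (a : ℝ) : IsOpen {z : ℂ | a < z.im} :=
  isOpen_lt continuous_const continuous_im

theorem isBigO_exp_mul_of_le {a b : ℝ} (hab : a ≤ b) :
    (fun t : ℝ ↦ Real.exp (a * t)) =O[atTop] fun t ↦ Real.exp (b * t) := by
  refine IsBigO.of_bound 1 ?_
  filter_upwards [eventually_ge_atTop 0] with t ht
  rw [Real.norm_of_nonneg (Real.exp_pos _).le, Real.norm_of_nonneg (Real.exp_pos _).le, one_mul]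
  gcongr

theorem isBigO_pow_smul_exp {g : ℝ → E} {m m' : ℝ} (k : ℕ)
    (hgm : g =O[atTop] fun t ↦ Real.exp (m * t)) (hm : m < m') :
    (fun t : ℝ ↦ (t : ℂ) ^ k • g t) =O[atTop] fun t ↦ Real.exp (m' * t) := by
  have hpow : (fun t : ℝ ↦ (t : ℂ) ^ k) =O[atTop] fun t ↦ Real.exp ((m' - m) * t) := by
    simpa only [← ofReal_pow, isBigO_ofReal_left] using
      (isLittleO_pow_exp_pos_mul_atTop k (sub_pos.2 hm)).isBigO
  refine (hpow.smul hgm).congr_right fun t ↦ ?_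
  rw [smul_eq_mul, ← Real.exp_add]
  ring_nf

theorem norm_exp_I_mul (z : ℂ) (t : ℝ) : ‖exp (I * z * t)‖ = Real.exp (-z.im * t) := by
  simp [norm_exp]

theorem integrableOn_exp_smul {g : ℝ → E} (hg : ContinuousOn g (Ici 0)) {m : ℝ}
    (hgm : g =O[atTop] fun t ↦ Real.exp (m * t)) {z : ℂ} (hz : m < z.im) :
    IntegrableOn (fun t : ℝ ↦ exp (I * z * t) • g t) (Ioi 0) := by
  have hcont : ContinuousOn (fun t : ℝ ↦ exp (I * z * t) • g t) (Ici 0) :=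
    ContinuousOn.smul (by fun_prop) hg
  have hexp : (fun t : ℝ ↦ exp (I * z * t)) =O[atTop] fun t ↦ Real.exp (-z.im * t) :=
    .of_norm_le fun t ↦ (norm_exp_I_mul z t).le
  have hO : (fun t : ℝ ↦ exp (I * z * t) • g t) =O[atTop] fun t ↦ Real.exp (-(z.im - m) * t) := by
    refine (hexp.smul hgm).congr_right fun t ↦ ?_
    rw [smul_eq_mul, ← Real.exp_add]
    ring_nf
  refine IntegrableOn.mono_set ?_ Ioi_subset_Ici_self
  exact (hcont.locallyIntegrableOn measurableSet_Ici).integrableOn_of_isBigO_atTop hO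
    ⟨Ioi 0, Ioi_mem_atTop 0, exp_neg_integrableOn_Ioi 0 (sub_pos.2 hz)⟩

/-- The one-sided Fourier–Laplace transform `z ↦ -i ∫₀^∞ e^{izt} g(t) dt`, normalized so that
`t ↦ ⟨φ, e^{-itL}ψ⟩` is sent to the matrix element `⟨φ, (z - L)⁻¹ψ⟩` of the resolvent. It has the
junk value `0` where the integral diverges. -/
noncomputable def fourierLaplace (g : ℝ → E) (z : ℂ) : E :=
  -I • ∫ t in Ioi (0 : ℝ), exp (I * z * t) • g t

theorem hasDerivAt_fourierLaplace {g : ℝ → E} (hg : ContinuousOn g (Ici 0)) {m : ℝ}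
    (hgm : g =O[atTop] fun t ↦ Real.exp (m * t)) {z : ℂ} (hz : m < z.im) :
    HasDerivAt (fourierLaplace g) (I • fourierLaplace (fun t : ℝ ↦ (t : ℂ) • g t) z) z := by
  obtain ⟨m', hmm', hm'z⟩ := exists_between hz
  obtain ⟨b, hm'b, hbz⟩ := exists_between hm'z
  have htg : ContinuousOn (fun t : ℝ ↦ (t : ℂ) • g t) (Ici 0) :=
    continuous_ofReal.continuousOn.smul hg
  have htgm : (fun t : ℝ ↦ (t : ℂ) • g t) =O[atTop] fun t ↦ Real.exp (m' * t) := by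
    simpa only [pow_one] using isBigO_pow_smul_exp 1 hgm hmm'
  have hderiv (x : ℂ) (t : ℝ) : HasDerivAt (fun x ↦ exp (I * x * t) • g t)
      (I • exp (I * x * t) • (t : ℂ) • g t) x := by
    convert! ((((hasDerivAt_id x).const_mul I).mul_const (t : ℂ)).cexp).smul_const (g t) using 1
    simp only [smul_smul, id, mul_one]
    ring_nf
  have hint := integrableOn_exp_smul htg htgm hm'z
  have hdom : IntegrableOn (fun t : ℝ ↦ ‖exp (I * (b * I) * t) • (t : ℂ) • g t‖) (Ioi 0) :=
    (integrableOn_exp_smul htg htgm (by simpa using hm'b)).norm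
  have key := (hasDerivAt_integral_of_dominated_loc_of_deriv_le
    ((isOpen_lt_im b).mem_nhds hbz) (eventually_of_mem ((isOpen_lt_im m).mem_nhds hz)
      fun x hx ↦ (integrableOn_exp_smul hg hgm hx).aestronglyMeasurable)
    (integrableOn_exp_smul hg hgm hz) (hint.smul I).aestronglyMeasurable
    ?_ hdom (.of_forall fun t x _ ↦ hderiv x t)).2
  · refine (key.const_smul (-I)).congr_deriv ?_
    rw [fourierLaplace, integral_smul, smul_comm]
  · filter_upwards [ae_restrict_mem measurableSet_Ioi] with t ht x hx
    have hbI : ((b : ℂ) * I).im = b := by simp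
    have hxt : -x.im * t ≤ -b * t :=
      mul_le_mul_of_nonneg_right (neg_le_neg (le_of_lt hx)) (le_of_lt ht)
    rw [norm_smul, norm_I, one_mul, norm_smul, norm_smul (exp _), norm_exp_I_mul, norm_exp_I_mul,
      hbI]
    exact mul_le_mul_of_nonneg_right (Real.exp_le_exp.2 hxt) (norm_nonneg _)

/-- The time evolution `e^{-itw} (-it)^k / k!` produced by a pole of order `k + 1` at `w`,
normalized so that its Fourier–Laplace transform is `(z - w)^{-(k+1)}`. -/
noncomputable def resonantMode (w : ℂ) (k : ℕ) (t : ℝ) : ℂ :=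
  exp (-(I * t * w)) * ((-I * t) ^ k / k !)

theorem continuous_resonantMode (w : ℂ) (k : ℕ) : Continuous (resonantMode w k) := by
  unfold resonantMode
  fun_prop

theorem isBigO_resonantMode {w : ℂ} (k : ℕ) {m : ℝ} (hw : w.im < m) :
    resonantMode w k =O[atTop] fun t ↦ Real.exp (m * t) := by
  have hexp : (fun t : ℝ ↦ exp (-(I * t * w))) =O[atTop] fun t ↦ Real.exp (w.im * t) := by
    refine .of_norm_le fun t ↦ le_of_eq ?_
    simpa [mul_right_comm] using norm_exp_I_mul (-w) t
  refine ((isBigO_pow_smul_exp k hexp hw).const_mul_left ((-I) ^ k / k !)).congr_left fun t ↦ ?_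
  rw [resonantMode, smul_eq_mul]
  ring

theorem ofReal_mul_resonantMode (w : ℂ) (k : ℕ) (t : ℝ) :
    (t : ℂ) * resonantMode w k t = I * (k + 1) * resonantMode w (k + 1) t := by
  have hk : (k ! : ℂ) ≠ 0 := mod_cast k.factorial_ne_zero
  have hk1 : (k + 1 : ℂ) ≠ 0 := mod_cast k.succ_ne_zero
  rw [resonantMode, resonantMode, Nat.factorial_succ]
  push_cast
  field_simp
  linear_combination ((t : ℂ) * (-(I * t)) ^ k) * I_sq

theorem hasDerivAt_inv_sub_pow {w z : ℂ} (k : ℕ) (hz : z ≠ w) :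
    HasDerivAt (fun z ↦ ((z - w) ^ (k + 1))⁻¹) (-(k + 1) * ((z - w) ^ (k + 2))⁻¹) z := by
  have hne : z - w ≠ 0 := sub_ne_zero.2 hz
  convert! (((hasDerivAt_id z).sub_const w).pow (k + 1)).inv (pow_ne_zero _ hne) using 1
  simp only [id_eq, Nat.cast_add, Nat.cast_one, add_tsub_cancel_right, mul_one, Pi.pow_apply]
  field_simp
  ring

theorem fourierLaplace_resonantMode {w : ℂ} (k : ℕ) {z : ℂ} (hz : w.im < z.im) :
    fourierLaplace (resonantMode w k) z = ((z - w) ^ (k + 1))⁻¹ := by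
  have ne_of_im_lt {x : ℂ} (hx : w.im < x.im) : x ≠ w := by
    rintro rfl
    exact lt_irrefl _ hx
  induction k generalizing z with
  | zero =>
    have hre : (I * (z - w)).re < 0 := by simpa using hz
    have hmode (t : ℝ) : exp (I * z * t) • resonantMode w 0 t = exp (I * (z - w) * t) := by
      rw [resonantMode, pow_zero, Nat.factorial_zero, Nat.cast_one, div_one, mul_one, smul_eq_mul,
        ← exp_add]
      ring_nf
    have hne := sub_ne_zero.2 (ne_of_im_lt hz)
    have hI := I_ne_zero
    simp only [fourierLaplace, hmode]
    rw [integral_exp_mul_complex_Ioi hre]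
    simp only [ofReal_zero, mul_zero, exp_zero, smul_eq_mul, neg_mul, zero_add, pow_one]
    field_simp
  | succ k ih =>
    obtain ⟨m, hwm, hmz⟩ := exists_between hz
    have hL := hasDerivAt_fourierLaplace (continuous_resonantMode w k).continuousOn
      (isBigO_resonantMode k hwm) hmz
    have hpow := (hasDerivAt_inv_sub_pow k (ne_of_im_lt hz)).congr_of_eventuallyEq
      (eventually_of_mem ((isOpen_lt_im w.im).mem_nhds hz) fun x hx ↦ ih hx)
    have huniq := hL.unique hpow
    have hk1 : (k + 1 : ℂ) ≠ 0 := mod_cast k.succ_ne_zero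
    have hscale : fourierLaplace (fun t : ℝ ↦ (t : ℂ) • resonantMode w k t) z =
        I * (k + 1) * fourierLaplace (resonantMode w (k + 1)) z := by
      simp only [fourierLaplace, smul_eq_mul, ofReal_mul_resonantMode,
        mul_left_comm (exp _) (I * (k + 1)), integral_const_mul]
      ring
    rw [hscale, smul_eq_mul] at huniq
    refine mul_left_cancel₀ (neg_ne_zero.2 hk1) ?_
    linear_combination huniq - (k + 1) * fourierLaplace (resonantMode w (k + 1)) z * I_sq

theorem fourier_indicator_exp_smul (g : ℝ → E) (c ξ : ℝ) :
    𝓕 ((Ioi 0).indicator fun t : ℝ ↦ exp (-(c * t)) • g t) ξ =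
      I • fourierLaplace g ((-2 * π * ξ : ℝ) + c * I) := by
  rw [Real.fourier_real_eq_integral_exp_smul, fourierLaplace, smul_smul, mul_neg, I_mul_I, neg_neg,
    one_smul, ← integral_indicator measurableSet_Ioi]
  congr 1 with t
  by_cases ht : t ∈ Ioi (0 : ℝ)
  · rw [indicator_of_mem ht, indicator_of_mem ht, smul_smul, ← exp_add]
    congr 2
    push_cast
    linear_combination (-(c * t) : ℂ) * I_sq
  · rw [indicator_of_notMem ht, indicator_of_notMem ht, smul_zero]

theorem integrable_indicator_exp_smul {g : ℝ → E} (hg : ContinuousOn g (Ici 0)) {m c : ℝ}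
    (hgm : g =O[atTop] fun t ↦ Real.exp (m * t)) (hc : m < c) :
    Integrable ((Ioi 0).indicator fun t : ℝ ↦ exp (-(c * t)) • g t) := by
  rw [integrable_indicator_iff measurableSet_Ioi]
  convert! integrableOn_exp_smul hg hgm (z := c * I) (by simpa using hc) using 4 with t
  linear_combination (-(c * t) : ℂ) * I_sq

theorem integral_exp_smul_fourierLaplace [CompleteSpace E] {g : ℝ → E}
    (hg : ContinuousOn g (Ici 0)) {m c : ℝ} (hgm : g =O[atTop] fun t ↦ Real.exp (m * t))
    (hc : m < c) (hint : Integrable fun x : ℝ ↦ fourierLaplace g (x + c * I)) {t : ℝ} (ht : 0 < t) :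
    ∫ x : ℝ, exp (-(I * (x + c * I) * t)) • fourierLaplace g (x + c * I) =
      (-(2 * π * I)) • g t := by
  set w : ℝ → E := (Ioi 0).indicator fun t : ℝ ↦ exp (-(c * t)) • g t
  have hpi : -2 * π ≠ 0 := by simp [Real.pi_ne_zero]
  have hfourier : 𝓕 w = fun ξ : ℝ ↦ I • fourierLaplace g ((-2 * π * ξ : ℝ) + c * I) :=
    funext (fourier_indicator_exp_smul g c)
  have hwint : Integrable w := integrable_indicator_exp_smul hg hgm hc
  have hFint : Integrable (𝓕 w) := by
    rw [hfourier]
    exact (hint.comp_mul_left' hpi).smul I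
  have hwt : w =ᶠ[𝓝 t] fun t : ℝ ↦ exp (-(c * t)) • g t :=
    eventually_of_mem (Ioi_mem_nhds ht) fun s hs ↦ indicator_of_mem hs _
  have hwcont : ContinuousAt w t := by
    refine ContinuousAt.congr ?_ hwt.symm
    exact ContinuousAt.smul (by fun_prop) (hg.continuousAt (Ici_mem_nhds ht))
  set ψ : ℝ → E := fun x ↦ exp (-(I * (x + c * I) * t)) • fourierLaplace g (x + c * I) with hψ
  have hphase (ξ : ℝ) : exp ((2 * π * inner ℝ ξ t : ℝ) * I) • 𝓕 w ξ =
      (I * exp (-(c * t))) • ψ (-2 * π * ξ) := by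
    simp only [hfourier, hψ, smul_smul, mul_comm _ I, mul_assoc I, ← exp_add]
    congr 3
    simp only [RCLike.inner_apply, Real.ringHom_apply, ofReal_mul, ofReal_neg, ofReal_ofNat,
      neg_mul]
    linear_combination (c * t : ℂ) * I_sq
  have hinv := hwint.fourierInv_fourier_eq hFint hwcont
  rw [Real.fourierInv_eq'] at hinv
  simp only [hphase] at hinv
  rw [integral_smul, Measure.integral_comp_mul_left ψ (-2 * π), hwt.self_of_nhds,
    mul_comm I, mul_smul] at hinv
  have hcancel := smul_right_injective E (exp_ne_zero _) hinv
  have habs : |(-2 * π)⁻¹| = (2 * π)⁻¹ := by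
    rw [abs_inv, neg_mul, abs_neg, abs_of_pos Real.two_pi_pos]
  rw [← hcancel, ← coe_smul, smul_smul, smul_smul, habs]
  have hpi' : (π : ℂ) ≠ 0 := mod_cast Real.pi_ne_zero
  convert! (one_smul ℂ _).symm using 2
  push_cast
  field_simp
  linear_combination -I_sq

theorem continuousOn_comp_add_mul_I {X : Type*} [TopologicalSpace X] {f : ℂ → X} {a b : ℝ}
    (hf : ContinuousOn f (im ⁻¹' Icc a b)) :
    ContinuousOn (fun q : ℝ × ℝ ↦ f (q.1 + q.2 * I)) (univ ×ˢ Icc a b) :=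
  hf.comp (by fun_prop) fun q hq ↦ by simpa using hq.2

theorem continuous_comp_add_mul_I {X : Type*} [TopologicalSpace X] {f : ℂ → X} {a b : ℝ}
    (hf : ContinuousOn f (im ⁻¹' Icc a b)) {y : ℝ} (hy : y ∈ Icc a b) :
    Continuous fun x : ℝ ↦ f (x + y * I) :=
  hf.comp_continuous (by fun_prop) fun x ↦ by simpa using hy

theorem integral_horizontal_eq_of_integrable_strip {f : ℂ → E} {a b : ℝ} (hab : a ≤ b)
    (hf : DifferentiableOn ℂ f (im ⁻¹' Icc a b))
    (hstrip : Integrable (fun q : ℝ × ℝ ↦ f (q.1 + q.2 * I))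
      (volume.prod (volume.restrict (Icc a b))))
    (ha : Integrable fun x : ℝ ↦ f (x + a * I)) (hb : Integrable fun x : ℝ ↦ f (x + b * I)) :
    ∫ x : ℝ, f (x + a * I) = ∫ x : ℝ, f (x + b * I) := by
  set side : ℝ → E := fun x ↦ ∫ y in a..b, f (x + y * I) with hside
  have hside_int : Integrable side := by
    simpa only [hside, intervalIntegral.integral_of_le hab, integral_Icc_eq_integral_Ioc] using
      hstrip.integral_prod_left
  have hrect (R : ℝ) : (∫ x in (-R)..R, f (x + a * I)) - ∫ x in (-R)..R, f (x + b * I) =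
      I • side (-R) - I • side R := by
    have h := Complex.integral_boundary_rect_eq_zero_of_differentiableOn f ⟨-R, a⟩ ⟨R, b⟩
      (hf.mono fun z hz ↦ by simpa only [mem_preimage, uIcc_of_le hab] using hz.2)
    rw [← sub_eq_zero, ← h]
    simp only [hside]
    abel
  have hlim : Tendsto (fun R ↦ I • side (-R) - I • side R) atTop
      (𝓝 ((∫ x : ℝ, f (x + a * I)) - ∫ x : ℝ, f (x + b * I))) := by
    simp only [← hrect]
    exact (intervalIntegral_tendsto_integral ha tendsto_neg_atTop_atBot tendsto_id).sub
      (intervalIntegral_tendsto_integral hb tendsto_neg_atTop_atBot tendsto_id)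
  have hint : Integrable fun R ↦ I • side (-R) - I • side R :=
    (hside_int.comp_neg.smul I).sub (hside_int.smul I)
  refine sub_eq_zero.1 ((hint.integrableAtFilter atTop).eq_zero_of_tendsto (fun s hs ↦ ?_) hlim)
  obtain ⟨R, hR⟩ := mem_atTop_sets.1 hs
  exact measure_mono_top hR Real.volume_Ici

theorem integral_horizontal_eq_of_lintegral_le {f : ℂ → E} {a b : ℝ} (hab : a ≤ b)
    (hf : DifferentiableOn ℂ f (im ⁻¹' Icc a b)) {B : ℝ≥0∞} (hB : B ≠ ∞)
    (hfB : ∀ y ∈ Icc a b, ∫⁻ x : ℝ, ‖f (x + y * I)‖ₑ ≤ B) :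
    ∫ x : ℝ, f (x + a * I) = ∫ x : ℝ, f (x + b * I) := by
  have hline (y : ℝ) (hy : y ∈ Icc a b) : Integrable fun x : ℝ ↦ f (x + y * I) :=
    ⟨(continuous_comp_add_mul_I hf.continuousOn hy).aestronglyMeasurable,
      (hfB y hy).trans_lt hB.lt_top⟩
  have hmeas : AEStronglyMeasurable (fun q : ℝ × ℝ ↦ f (q.1 + q.2 * I))
      (volume.prod (volume.restrict (Icc a b))) := by
    rw [← Measure.restrict_univ (μ := volume), Measure.prod_restrict]
    exact (continuousOn_comp_add_mul_I hf.continuousOn).aestronglyMeasurable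
      (MeasurableSet.univ.prod measurableSet_Icc)
  refine integral_horizontal_eq_of_integrable_strip hab hf ⟨hmeas, ?_⟩
    (hline a (left_mem_Icc.2 hab)) (hline b (right_mem_Icc.2 hab))
  calc ∫⁻ q : ℝ × ℝ, ‖f (q.1 + q.2 * I)‖ₑ ∂volume.prod (volume.restrict (Icc a b))
      = ∫⁻ y in Icc a b, ∫⁻ x : ℝ, ‖f (x + y * I)‖ₑ := lintegral_prod_symm _ hmeas.enorm
    _ ≤ ∫⁻ _ in Icc a b, B := setLIntegral_mono measurable_const hfB
    _ < ∞ := by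
      rw [setLIntegral_const]
      exact ENNReal.mul_lt_top hB.lt_top measure_Icc_lt_top

theorem lintegral_enorm_exp_smul (Φ : ℂ → E) (t y : ℝ) :
    ∫⁻ x : ℝ, ‖exp (-(I * (x + y * I) * t)) • Φ (x + y * I)‖ₑ =
      ENNReal.ofReal (Real.exp (y * t)) * ∫⁻ x : ℝ, ‖Φ (x + y * I)‖ₑ := by
  have hexp (x : ℝ) : ‖exp (-(I * (x + y * I) * t))‖ₑ = ENNReal.ofReal (Real.exp (y * t)) := by
    rw [← ofReal_norm, norm_exp]
    simp
  simp only [enorm_smul, hexp]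
  exact lintegral_const_mul' _ _ ENNReal.ofReal_ne_top

theorem norm_le_exp_of_fourierLaplace_eqOn [CompleteSpace E] {g : ℝ → E}
    (hg : ContinuousOn g (Ici 0)) {m c : ℝ} (hgm : g =O[atTop] fun t ↦ Real.exp (m * t))
    (hc : m < c) {a : ℝ} (hac : a ≤ c) {Φ : ℂ → E} (hΦ : DifferentiableOn ℂ Φ (im ⁻¹' Icc a c))
    (hΦg : ∀ x : ℝ, Φ (x + c * I) = fourierLaplace g (x + c * I)) {B : ℝ≥0∞} (hB : B ≠ ∞)
    (hΦB : ∀ y ∈ Icc a c, ∫⁻ x : ℝ, ‖Φ (x + y * I)‖ₑ ≤ B) {t : ℝ} (ht : 0 < t) :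
    ‖g t‖ ≤ B.toReal / (2 * π) * Real.exp (a * t) := by
  set ψ : ℂ → E := fun z ↦ exp (-(I * z * t)) • Φ z with hψ
  have hψB (y : ℝ) (hy : y ∈ Icc a c) :
      ∫⁻ x : ℝ, ‖ψ (x + y * I)‖ₑ ≤ ENNReal.ofReal (Real.exp (y * t)) * B := by
    rw [lintegral_enorm_exp_smul]
    gcongr
    exact hΦB y hy
  have hshift : ∫ x : ℝ, ψ (x + a * I) = ∫ x : ℝ, ψ (x + c * I) := by
    refine integral_horizontal_eq_of_lintegral_le hac (DifferentiableOn.smul (by fun_prop) hΦ)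
      (B := ENNReal.ofReal (Real.exp (c * t)) * B)
      (ENNReal.mul_ne_top ENNReal.ofReal_ne_top hB) fun y hy ↦ (hψB y hy).trans ?_
    gcongr
    exact hy.2
  have hinversion : ∫ x : ℝ, ψ (x + c * I) = (-(2 * π * I)) • g t := by
    have hint : Integrable fun x : ℝ ↦ Φ (x + c * I) :=
      ⟨(continuous_comp_add_mul_I hΦ.continuousOn (right_mem_Icc.2 hac)).aestronglyMeasurable,
        (hΦB c (right_mem_Icc.2 hac)).trans_lt hB.lt_top⟩
    simp only [hΦg] at hint
    simpa only [hψ, hΦg] using integral_exp_smul_fourierLaplace hg hgm hc hint ht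
  have hle : 2 * π * ‖g t‖ ≤ Real.exp (a * t) * B.toReal := by
    calc 2 * π * ‖g t‖ = ‖∫ x : ℝ, ψ (x + a * I)‖ := by
          rw [hshift, hinversion, norm_smul]
          simp [abs_of_pos Real.pi_pos]
      _ ≤ (∫⁻ x : ℝ, ‖ψ (x + a * I)‖ₑ).toReal := by
          simpa only [ofReal_norm] using norm_integral_le_lintegral_norm fun x : ℝ ↦ ψ (x + a * I)
      _ ≤ (ENNReal.ofReal (Real.exp (a * t)) * B).toReal :=
          ENNReal.toReal_mono (ENNReal.mul_ne_top ENNReal.ofReal_ne_top hB)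
            (hψB a (left_mem_Icc.2 hac))
      _ = Real.exp (a * t) * B.toReal := by
          rw [ENNReal.toReal_mul, ENNReal.toReal_ofReal (Real.exp_pos _).le]
  rw [div_mul_eq_mul_div, le_div_iff₀ Real.two_pi_pos]
  linarith

theorem fourierLaplace_sub {g h : ℝ → E} (hg : ContinuousOn g (Ici 0))
    (hh : ContinuousOn h (Ici 0)) {m : ℝ} (hgm : g =O[atTop] fun t ↦ Real.exp (m * t))
    (hhm : h =O[atTop] fun t ↦ Real.exp (m * t)) {z : ℂ} (hz : m < z.im) :
    fourierLaplace (g - h) z = fourierLaplace g z - fourierLaplace h z := by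
  simp only [fourierLaplace, Pi.sub_apply, smul_sub]
  rw [integral_sub (integrableOn_exp_smul hg hgm hz) (integrableOn_exp_smul hh hhm hz), smul_sub]

/-- The polar part at `w` of a Laurent expansion: `b k` is the coefficient of `(z - w)^{-(k+1)}`, so
that `b 0` is the residue. -/
noncomputable def polarPart (b : ℕ → E) (w : ℂ) (N : ℕ) (z : ℂ) : E :=
  ∑ k ∈ Finset.range N, ((z - w) ^ (k + 1))⁻¹ • b k

/-- The superposition of resonant modes whose Fourier–Laplace transform is `polarPart b w N`. -/
noncomputable def resonantPart (b : ℕ → E) (w : ℂ) (N : ℕ) (t : ℝ) : E :=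
  ∑ k ∈ Finset.range N, resonantMode w k t • b k

theorem continuous_resonantPart (b : ℕ → E) (w : ℂ) (N : ℕ) : Continuous (resonantPart b w N) :=
  continuous_finsetSum _ fun k _ ↦ (continuous_resonantMode w k).smul continuous_const

theorem isBigO_resonantPart (b : ℕ → E) {w : ℂ} (N : ℕ) {m : ℝ} (hw : w.im < m) :
    resonantPart b w N =O[atTop] fun t ↦ Real.exp (m * t) := by
  refine IsBigO.fun_sum fun k _ ↦ ?_
  simpa only [smul_eq_mul, mul_one] using
    (isBigO_resonantMode k hw).smul (isBigO_const_const (b k) (one_ne_zero' ℝ) atTop)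

theorem fourierLaplace_resonantPart [CompleteSpace E] (b : ℕ → E) {w : ℂ} (N : ℕ) {z : ℂ}
    (hz : w.im < z.im) : fourierLaplace (resonantPart b w N) z = polarPart b w N z := by
  obtain ⟨m, hwm, hmz⟩ := exists_between hz
  have hint (k : ℕ) : IntegrableOn (fun t : ℝ ↦ (exp (I * z * t) • resonantMode w k t) • b k)
      (Ioi 0) :=
    (integrableOn_exp_smul (continuous_resonantMode w k).continuousOn
      (isBigO_resonantMode k hwm) hmz).smul_const (b k)
  simp only [fourierLaplace, resonantPart, Finset.smul_sum, ← smul_assoc]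
  rw [integral_finsetSum _ fun k _ ↦ hint k, Finset.smul_sum]
  refine Finset.sum_congr rfl fun k _ ↦ ?_
  rw [integral_smul_const, ← smul_assoc, ← fourierLaplace_resonantMode k hz, fourierLaplace]

theorem hasDerivAt_polarPart (b : ℕ → E) {w : ℂ} (N : ℕ) {z : ℂ} (hz : z ≠ w) :
    HasDerivAt (polarPart b w N)
      (∑ k ∈ Finset.range N, (-(k + 1) * ((z - w) ^ (k + 2))⁻¹) • b k) z :=
  HasDerivAt.fun_sum fun k _ ↦ (hasDerivAt_inv_sub_pow k hz).smul_const (b k)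

theorem deriv_eq_sub_deriv_polarPart {F H : ℂ → E} {b : ℕ → E} {w : ℂ} {N : ℕ} {s : Set ℂ}
    (hs : IsOpen s) (hH : DifferentiableOn ℂ H s)
    (hFH : ∀ z ∈ s, z ≠ w → F z = H z + polarPart b w N z) {z : ℂ} (hz : z ∈ s) (hzw : z ≠ w) :
    deriv H z = deriv F z - deriv (polarPart b w N) z := by
  have hF : F =ᶠ[𝓝 z] H + polarPart b w N := by
    filter_upwards [hs.mem_nhds hz, isOpen_ne.mem_nhds hzw] with x hx hxw
    exact hFH x hx hxw
  rw [hF.deriv_eq, deriv_add (hH.differentiableAt (hs.mem_nhds hz))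
    (hasDerivAt_polarPart b N hzw).differentiableAt, add_sub_cancel_right]

theorem norm_inv_sub_pow_le {w z : ℂ} (k : ℕ) (hz : 1 ≤ |z.re - w.re|) :
    ‖((z - w) ^ (k + 2))⁻¹‖ ≤ 2 * (1 + (z.re - w.re) ^ 2)⁻¹ := by
  have hre : |z.re - w.re| ≤ ‖z - w‖ := by simpa using abs_re_le_norm (z - w)
  have hsq : 1 + (z.re - w.re) ^ 2 ≤ 2 * ‖z - w‖ ^ (k + 2) := by
    calc 1 + (z.re - w.re) ^ 2 ≤ 2 * |z.re - w.re| ^ 2 := by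
          rw [← sq_abs]
          linarith [one_le_pow₀ hz (n := 2)]
      _ ≤ 2 * |z.re - w.re| ^ (k + 2) := by
          gcongr
          omega
      _ ≤ 2 * ‖z - w‖ ^ (k + 2) := by gcongr
  have hpos : 0 < ‖z - w‖ := by linarith
  rw [norm_inv, norm_pow, ← div_eq_mul_inv, inv_eq_one_div,
    div_le_div_iff₀ (by positivity) (by positivity)]
  linarith

theorem exists_norm_deriv_polarPart_le (b : ℕ → E) (w : ℂ) (N : ℕ) :
    ∃ K : ℝ, ∀ z : ℂ, 1 ≤ |z.re - w.re| →
      ‖deriv (polarPart b w N) z‖ ≤ K * (1 + (z.re - w.re) ^ 2)⁻¹ := by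
  refine ⟨∑ k ∈ Finset.range N, ‖(-(k + 1) : ℂ)‖ * 2 * ‖b k‖, fun z hz ↦ ?_⟩
  have hzw : z ≠ w := by
    rintro rfl
    norm_num at hz
  rw [(hasDerivAt_polarPart b N hzw).deriv, Finset.sum_mul]
  refine norm_sum_le_of_le _ fun k _ ↦ ?_
  rw [norm_smul, norm_mul]
  calc ‖(-(k + 1) : ℂ)‖ * ‖((z - w) ^ (k + 2))⁻¹‖ * ‖b k‖
      ≤ ‖(-(k + 1) : ℂ)‖ * (2 * (1 + (z.re - w.re) ^ 2)⁻¹) * ‖b k‖ := by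
        gcongr
        exact norm_inv_sub_pow_le k hz
    _ = ‖(-(k + 1) : ℂ)‖ * 2 * ‖b k‖ * (1 + (z.re - w.re) ^ 2)⁻¹ := by ring

theorem exists_lintegral_deriv_polarPart_le (b : ℕ → E) (w : ℂ) (N : ℕ) :
    ∃ B : ℝ≥0∞, B ≠ ∞ ∧ ∀ y : ℝ,
      ∫⁻ x in {x : ℝ | 1 + |w.re| < |x|}, ‖deriv (polarPart b w N) (x + y * I)‖ₑ ≤ B := by
  obtain ⟨K, hK⟩ := exists_norm_deriv_polarPart_le b w N
  have hint : Integrable fun x : ℝ ↦ K * (1 + (x - w.re) ^ 2)⁻¹ :=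
    (integrable_inv_one_add_sq.comp_sub_right w.re).const_mul K
  refine ⟨∫⁻ x : ℝ, ENNReal.ofReal (K * (1 + (x - w.re) ^ 2)⁻¹), hint.lintegral_lt_top.ne,
    fun y ↦ ?_⟩
  refine (setLIntegral_mono' (measurableSet_lt measurable_const measurable_norm)
    fun x hx ↦ ?_).trans (setLIntegral_le_lintegral _ _)
  have hx' : 1 + |w.re| < |x| := hx
  have hK' := hK (x + y * I)
  have hre : ((x : ℂ) + y * I).re = x := by simp
  rw [hre] at hK'
  rw [← ofReal_norm]
  exact ENNReal.ofReal_le_ofReal (hK' (by linarith [abs_sub_abs_le_abs_sub x w.re]))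

theorem exists_lintegral_horizontal_le {V : Type*} [SeminormedAddCommGroup V] {f : ℂ → V}
    {a b r : ℝ} (hf : ContinuousOn f (im ⁻¹' Icc a b)) {B : ℝ≥0∞} (hB : B ≠ ∞)
    (hfB : ∀ y ∈ Icc a b, ∫⁻ x in {x : ℝ | r < |x|}, ‖f (x + y * I)‖ₑ ≤ B) :
    ∃ B' : ℝ≥0∞, B' ≠ ∞ ∧ ∀ y ∈ Icc a b, ∫⁻ x : ℝ, ‖f (x + y * I)‖ₑ ≤ B' := by
  obtain ⟨K, hK⟩ := (isCompact_Icc.prod isCompact_Icc).exists_bound_of_continuousOn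
    ((continuousOn_comp_add_mul_I hf).mono (prod_mono_left (subset_univ (Icc (-r) r))))
  have htail : MeasurableSet {x : ℝ | r < |x|} := measurableSet_lt measurable_const measurable_norm
  have hcompl : {x : ℝ | r < |x|}ᶜ = Icc (-r) r := by
    ext x
    simp [abs_le]
  refine ⟨B + ENNReal.ofReal K * volume (Icc (-r) r), ENNReal.add_ne_top.2
    ⟨hB, ENNReal.mul_ne_top ENNReal.ofReal_ne_top measure_Icc_lt_top.ne⟩, fun y hy ↦ ?_⟩
  rw [← lintegral_add_compl _ htail, hcompl, ← setLIntegral_const]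
  refine add_le_add (hfB y hy) (setLIntegral_mono measurable_const fun x hx ↦ ?_)
  rw [← ofReal_norm]
  exact ENNReal.ofReal_le_ofReal (hK (x, y) ⟨hx, hy⟩)

theorem exists_lintegral_deriv_le_of_eq_add_polarPart [CompleteSpace E] {a a' c : ℝ}
    (haa' : a < a') {F H : ℂ → E} {b : ℕ → E} {w : ℂ} {N : ℕ}
    (hH : DifferentiableOn ℂ H {z | a < z.im})
    (hFH : ∀ z : ℂ, a < z.im → z ≠ w → F z = H z + polarPart b w N z) {r : ℝ} {B : ℝ≥0∞}
    (hB : B ≠ ∞)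
    (hFB : ∀ y, a < y → ∫⁻ x in {x : ℝ | r < |x|}, ‖deriv F (x + y * I)‖ₑ ≤ B) :
    ∃ B' : ℝ≥0∞, B' ≠ ∞ ∧ ∀ y ∈ Icc a' c, ∫⁻ x : ℝ, ‖deriv H (x + y * I)‖ₑ ≤ B' := by
  obtain ⟨Q, hQ, hQB⟩ := exists_lintegral_deriv_polarPart_le b w N
  set S : Set ℝ := {x | max r (1 + |w.re|) < |x|}
  refine exists_lintegral_horizontal_le (r := max r (1 + |w.re|))
    ((hH.deriv (isOpen_lt_im a)).continuousOn.mono fun z hz ↦ haa'.trans_le hz.1)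
    (ENNReal.add_ne_top.2 ⟨hB, hQ⟩) fun y hy ↦ ?_
  have hya : a < y := haa'.trans_le hy.1
  have hSF : S ⊆ {x | r < |x|} := fun x (hx : _ < |x|) ↦ (max_lt_iff.1 hx).1
  have hSQ : S ⊆ {x | 1 + |w.re| < |x|} := fun x (hx : _ < |x|) ↦ (max_lt_iff.1 hx).2
  calc ∫⁻ x in S, ‖deriv H (x + y * I)‖ₑ
      ≤ ∫⁻ x in S, (‖deriv F (x + y * I)‖ₑ + ‖deriv (polarPart b w N) (x + y * I)‖ₑ) := by
        refine setLIntegral_mono' (measurableSet_lt measurable_const measurable_norm) fun x hx ↦ ?_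
        have hxw : (x + y * I : ℂ) ≠ w := by
          intro hxw
          have hre : w.re = x := by simp [← hxw]
          have hlt : 1 + |w.re| < |x| := hSQ hx
          rw [hre] at hlt
          linarith
        rw [deriv_eq_sub_deriv_polarPart (isOpen_lt_im a) hH hFH (by simpa using hya) hxw]
        exact enorm_sub_le
    _ = (∫⁻ x in S, ‖deriv F (x + y * I)‖ₑ) +
          ∫⁻ x in S, ‖deriv (polarPart b w N) (x + y * I)‖ₑ :=
        lintegral_add_right _ ((stronglyMeasurable_deriv _).enorm.comp (by fun_prop))
    _ ≤ B + Q := add_le_add ((lintegral_mono_set hSF).trans (hFB y hya))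
        ((lintegral_mono_set hSQ).trans (hQB y))

theorem iterate_dslope_self [CompleteSpace E] {f : ℂ → E} {w : ℂ} (hf : AnalyticAt ℂ f w) (n : ℕ) :
    (Function.swap dslope w)^[n] f w = (n ! : ℂ)⁻¹ • iteratedDeriv n f w := by
  obtain ⟨p, hp⟩ := hf
  have hcoeff : (Function.swap dslope w)^[n] f w = p.coeff n := by
    rw [← (hp.has_fpower_series_iterate_dslope_fslope n).coeff_zero 1,
      ← FormalMultilinearSeries.coeff, FormalMultilinearSeries.coeff_iterate_fslope, zero_add]
  obtain ⟨r, hr⟩ := hp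
  rw [hcoeff, iteratedDeriv_eq_iteratedFDeriv, eq_inv_smul_iff₀ (mod_cast n.factorial_ne_zero),
    ← hr.factorial_smul 1 n, Nat.cast_smul_eq_nsmul]
  rfl

theorem eq_sum_iterate_dslope_add (f : ℂ → E) (w z : ℂ) (n : ℕ) :
    f z = ∑ k ∈ Finset.range n, (z - w) ^ k • (Function.swap dslope w)^[k] f w +
      (z - w) ^ n • (Function.swap dslope w)^[n] f z := by
  induction n with
  | zero => simp
  | succ n ih =>
    have hstep := sub_smul_dslope ((Function.swap dslope w)^[n] f) w z
    rw [ih, Finset.sum_range_succ, Function.iterate_succ_apply', pow_succ, mul_smul,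
      Function.swap, hstep, smul_sub]
    abel

theorem differentiableOn_iterate_dslope [CompleteSpace E] {f : ℂ → E} {s : Set ℂ} {w : ℂ}
    (hs : s ∈ 𝓝 w) (hf : DifferentiableOn ℂ f s) (n : ℕ) :
    DifferentiableOn ℂ ((Function.swap dslope w)^[n] f) s := by
  induction n with
  | zero => exact hf
  | succ n ih =>
    rw [Function.iterate_succ_apply']
    exact (differentiableOn_dslope hs).2 ih

/-- The coefficient of `(z - w)^{-(k+1)}` in the Laurent expansion of `(z - w)^{-N} G(z)` at `w`.
Only the values at `k < N` are meaningful, because of the truncated subtraction. -/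
noncomputable def polarCoeff (G : ℂ → E) (w : ℂ) (N k : ℕ) : E :=
  ((N - 1 - k)! : ℂ)⁻¹ • iteratedDeriv (N - 1 - k) G w

theorem exists_inv_pow_smul_eq_add_polarPart [CompleteSpace E] {G : ℂ → E} {s : Set ℂ} {w : ℂ}
    (hs : s ∈ 𝓝 w) (hG : DifferentiableOn ℂ G s) (N : ℕ) :
    ∃ H : ℂ → E, DifferentiableOn ℂ H s ∧ ∀ z ≠ w,
      ((z - w) ^ N)⁻¹ • G z = H z + polarPart (polarCoeff G w N) w N z := by
  refine ⟨(Function.swap dslope w)^[N] G, differentiableOn_iterate_dslope hs hG N, fun z hz ↦ ?_⟩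
  have hzw : z - w ≠ 0 := sub_ne_zero.2 hz
  rw [eq_sum_iterate_dslope_add G w z N, smul_add, inv_smul_smul₀ (pow_ne_zero N hzw), add_comm,
    Finset.smul_sum, polarPart, ← Finset.sum_range_reflect]
  congr 1
  refine Finset.sum_congr rfl fun k hk ↦ ?_
  have hpow : (z - w) ^ N = (z - w) ^ (N - 1 - k) * (z - w) ^ (k + 1) := by
    rw [← pow_add]
    congr 1
    have := Finset.mem_range.1 hk
    omega
  rw [iterate_dslope_self (hG.analyticAt hs), polarCoeff, hpow, smul_smul]
  congr 1
  field_simp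

theorem exists_mul_norm_le_exp [CompleteSpace E] {h : ℝ → E} (hh : ContinuousOn h (Ici 0))
    {m : ℝ} (hhm : h =O[atTop] fun t ↦ Real.exp (m * t)) {a a' : ℝ} (haa' : a < a') {H : ℂ → E}
    (hH : DifferentiableOn ℂ H {z | a < z.im})
    (hHh : ∀ z : ℂ, m < z.im → a < z.im → H z = fourierLaplace h z)
    (hHB : ∀ c : ℝ, ∃ B : ℝ≥0∞, B ≠ ∞ ∧
      ∀ y ∈ Icc a' c, ∫⁻ x : ℝ, ‖deriv H (x + y * I)‖ₑ ≤ B) :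
    ∃ C : ℝ, ∀ t : ℝ, 0 < t → t * ‖h t‖ ≤ C * Real.exp (a' * t) := by
  obtain ⟨m', hmm'⟩ := exists_gt m
  obtain ⟨c, hc⟩ := exists_gt (max m' a')
  obtain ⟨hm'c, ha'c⟩ := max_lt_iff.1 hc
  obtain ⟨B, hB, hBH⟩ := hHB c
  have hthm : (fun t : ℝ ↦ (t : ℂ) • h t) =O[atTop] fun t ↦ Real.exp (m' * t) := by
    simpa only [pow_one] using isBigO_pow_smul_exp 1 hhm hmm'
  have hderiv (x : ℝ) : -I • deriv H (x + c * I) =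
      fourierLaplace (fun t : ℝ ↦ (t : ℂ) • h t) (x + c * I) := by
    have hm : m < (x + c * I : ℂ).im := by simpa using hmm'.trans hm'c
    have ha : a < (x + c * I : ℂ).im := by simpa using haa'.trans ha'c
    have hev : H =ᶠ[𝓝 (x + c * I : ℂ)] fourierLaplace h := by
      filter_upwards [(isOpen_lt_im m).mem_nhds hm, (isOpen_lt_im a).mem_nhds ha] with z hzm hza
      exact hHh z hzm hza
    rw [hev.deriv_eq, (hasDerivAt_fourierLaplace hh hhm hm).deriv, smul_smul, neg_mul, I_mul_I,
      neg_neg, one_smul]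
  refine ⟨B.toReal / (2 * π), fun t ht ↦ ?_⟩
  have hI : ‖I‖ₑ = 1 := by rw [← ofReal_norm, norm_I, ENNReal.ofReal_one]
  simpa [norm_smul, abs_of_pos ht] using norm_le_exp_of_fourierLaplace_eqOn
    (continuous_ofReal.continuousOn.smul hh) hthm hm'c ha'c.le
    (((hH.deriv (isOpen_lt_im a)).mono fun z hz ↦ haa'.trans_le hz.1).const_smul (-I)) hderiv hB
    (fun y hy ↦ by simpa [enorm_smul, hI] using hBH y hy) ht

theorem exists_norm_le_exp_of_mul_norm_le {V : Type*} [SeminormedAddCommGroup V] {h : ℝ → V}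
    (hh : ContinuousOn h (Ici 0)) {a C : ℝ}
    (hC : ∀ t : ℝ, 0 < t → t * ‖h t‖ ≤ C * Real.exp (a * t)) :
    ∃ C' : ℝ, 0 ≤ C' ∧ ∀ t : ℝ, 0 ≤ t → ‖h t‖ ≤ C' * Real.exp (a * t) := by
  have hcont : ContinuousOn (fun t ↦ Real.exp (-(a * t)) * ‖h t‖) (Icc 0 1) :=
    ContinuousOn.mul (by fun_prop) (hh.mono Icc_subset_Ici_self).norm
  obtain ⟨K, hK⟩ := isCompact_Icc.exists_bound_of_continuousOn hcont
  refine ⟨max 0 (max K C), le_max_left _ _, fun t ht ↦ ?_⟩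
  rcases le_total t 1 with ht1 | ht1
  · have hKt := (le_abs_self _).trans (hK t ⟨ht, ht1⟩)
    rw [Real.exp_neg, inv_mul_le_iff₀ (Real.exp_pos _), mul_comm] at hKt
    refine hKt.trans ?_
    gcongr
    exact (le_max_left K C).trans (le_max_right _ _)
  · calc ‖h t‖ ≤ t * ‖h t‖ := le_mul_of_one_le_left (norm_nonneg _) ht1
      _ ≤ C * Real.exp (a * t) := hC t (by linarith)
      _ ≤ max 0 (max K C) * Real.exp (a * t) := by
        gcongr
        exact (le_max_right K C).trans (le_max_right _ _)

theorem resonance_expansion_of_laplace_transform_general [CompleteSpace E] {g : ℝ → E}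
    (hg : ContinuousOn g (Ici 0)) {m : ℝ} (hgm : g =O[atTop] fun t ↦ Real.exp (m * t))
    {𝔯 : ℂ} {N : ℕ} {μ : ℝ} (h𝔯 : -μ < 𝔯.im) {F G : ℂ → E}
    (hFg : ∀ z : ℂ, m < z.im → F z = fourierLaplace g z)
    (hG : DifferentiableOn ℂ G {z | -μ < z.im})
    (hFG : ∀ z : ℂ, -μ < z.im → z ≠ 𝔯 → F z = ((z - 𝔯) ^ N)⁻¹ • G z) {r : ℝ} {B : ℝ≥0∞}
    (hB : B ≠ ∞)
    (hFB : ∀ y, -μ < y → ∫⁻ x in {x : ℝ | r < |x|}, ‖deriv F (x + y * I)‖ₑ ≤ B)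
    {γ : ℝ} (hγ : γ < μ) :
    ∃ C : ℝ, 0 ≤ C ∧ ∀ t : ℝ, 0 ≤ t →
      ‖g t - resonantPart (polarCoeff G 𝔯 N) 𝔯 N t‖ ≤ C * Real.exp (-γ * t) := by
  have hs : {z : ℂ | -μ < z.im} ∈ 𝓝 𝔯 := (isOpen_lt_im (-μ)).mem_nhds h𝔯
  obtain ⟨H, hH, hGH⟩ := exists_inv_pow_smul_eq_add_polarPart hs hG N
  have hFH (z : ℂ) (hz : -μ < z.im) (hz𝔯 : z ≠ 𝔯) :
      F z = H z + polarPart (polarCoeff G 𝔯 N) 𝔯 N z := (hFG z hz hz𝔯).trans (hGH z hz𝔯)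
  obtain ⟨m', hm'⟩ := exists_gt (max m 𝔯.im)
  obtain ⟨hmm', h𝔯m'⟩ := max_lt_iff.1 hm'
  have hgm' := hgm.trans (isBigO_exp_mul_of_le hmm'.le)
  have hres := (continuous_resonantPart (polarCoeff G 𝔯 N) 𝔯 N).continuousOn (s := Ici 0)
  have hresm' := isBigO_resonantPart (polarCoeff G 𝔯 N) N h𝔯m'
  have hHg (z : ℂ) (hz : m' < z.im) (hzμ : -μ < z.im) :
      H z = fourierLaplace (g - resonantPart (polarCoeff G 𝔯 N) 𝔯 N) z := by
    have hz𝔯 : 𝔯.im < z.im := h𝔯m'.trans hz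
    rw [fourierLaplace_sub hg hres hgm' hresm' hz, fourierLaplace_resonantPart _ N hz𝔯,
      ← hFg z (hmm'.trans hz), hFH z hzμ (by rintro rfl; exact lt_irrefl _ hz𝔯),
      add_sub_cancel_right]
  obtain ⟨C, hC⟩ := exists_mul_norm_le_exp (hg.sub hres) (hgm'.sub hresm') (neg_lt_neg hγ) hH hHg
    fun c ↦ exists_lintegral_deriv_le_of_eq_add_polarPart (neg_lt_neg hγ) hH hFH hB hFB
  exact exists_norm_le_exp_of_mul_norm_le (hg.sub hres) hC

/-- The polynomial factor `p` of a scalar resonant part `e^{-itw} p(t)` with polar coefficients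
`b 0, …, b (N - 1)`. -/
noncomputable def resonancePolynomial (b : ℕ → ℂ) (N : ℕ) : Polynomial ℂ :=
  ∑ k ∈ Finset.range N, Polynomial.monomial k ((-I) ^ k / k ! * b k)

theorem resonantPart_eq_exp_mul_eval (b : ℕ → ℂ) (w : ℂ) (N : ℕ) (t : ℝ) :
    resonantPart b w N t = exp (-(I * t * w)) * (resonancePolynomial b N).eval (t : ℂ) := by
  rw [resonantPart, resonancePolynomial, Polynomial.eval_finsetSum, Finset.mul_sum]
  refine Finset.sum_congr rfl fun k _ ↦ ?_
  rw [resonantMode, Polynomial.eval_monomial, smul_eq_mul]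
  ring

theorem coeff_resonancePolynomial (b : ℕ → ℂ) {N k : ℕ} (hk : k < N) :
    (resonancePolynomial b N).coeff k = (-I) ^ k / k ! * b k := by
  simp [resonancePolynomial, Polynomial.finsetSum_coeff, Polynomial.coeff_monomial, hk]

theorem eval_zero_resonancePolynomial (b : ℕ → ℂ) {N : ℕ} (hN : 0 < N) :
    (resonancePolynomial b N).eval 0 = b 0 := by
  rw [← Polynomial.coeff_zero_eq_eval_zero, coeff_resonancePolynomial b hN]
  simp

theorem natDegree_resonancePolynomial {b : ℕ → ℂ} {N : ℕ} (hN : 0 < N) (hb : b (N - 1) ≠ 0) :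
    (resonancePolynomial b N).natDegree = N - 1 := by
  refine Polynomial.natDegree_eq_of_le_of_coeff_ne_zero ?_ ?_
  · refine Polynomial.natDegree_sum_le_of_forall_le _ _ fun k hk ↦ ?_
    exact (Polynomial.natDegree_monomial_le _).trans (Nat.le_sub_one_of_lt (Finset.mem_range.1 hk))
  · rw [coeff_resonancePolynomial b (Nat.sub_one_lt_of_lt hN)]
    have hfac : ((N - 1)! : ℂ) ≠ 0 := mod_cast (N - 1).factorial_ne_zero
    exact mul_ne_zero (div_ne_zero (pow_ne_zero _ (neg_ne_zero.2 I_ne_zero)) hfac) hb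

end

/-- Resonance expansion (Proposition 5.1, stated via the Laplace transform):
if `g` is continuous with `‖g(t)‖ ≤ M e^{mt}`, its Laplace transform
`f(z) = -i ∫_0^∞ e^{izt} g(t) dt` (defined for `Im z > m`) extends meromorphically to
`{Im z > -μ}` with a unique singularity, a pole of order `N` at `𝔯` (witnessed by an
analytic `G` with `G 𝔯 ≠ 0` and `f = G/(z-𝔯)^N`), and the extension satisfies uniform
`L²` (resp. `L¹` for the derivative) bounds on horizontal lines away from `|x| ≤ r`,
then `g(t) = e^{-it𝔯} p(t) + O(e^{-γt})` for a polynomial `p` of degree `N-1` whose value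
at `0` is the residue of `f` at `𝔯`. -/
theorem resonance_expansion_of_laplace_transform
    (m M : ℝ) (hm : 0 < m) (hM : 0 < M)
    (g : ℝ → ℂ) (hgcont : ContinuousOn g (Set.Ici 0))
    (hgbound : ∀ t : ℝ, 0 ≤ t → ‖g t‖ ≤ M * Real.exp (m * t))
    (𝔯 : ℂ) (N : ℕ) (hN : 1 ≤ N) (μ : ℝ) (hμ : 0 < μ) (h𝔯 : -μ < 𝔯.im)
    (F : ℂ → ℂ)
    (hFeq : ∀ z : ℂ, m < z.im →
      F z = -Complex.I * ∫ t in Set.Ioi (0:ℝ), Complex.exp (Complex.I * z * t) * g t)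
    (G : ℂ → ℂ)
    (hGdiff : DifferentiableOn ℂ G {z : ℂ | -μ < z.im})
    (hG0 : G 𝔯 ≠ 0)
    (hFG : ∀ z : ℂ, -μ < z.im → z ≠ 𝔯 → F z = G z / (z - 𝔯) ^ N)
    (r : ℝ) (hr : 0 < r) (C0 C1 : ℝ)
    (hF0 : ∀ y : ℝ, -μ < y →
      ∫⁻ x in {x : ℝ | r < |x|},
        ENNReal.ofReal (‖F (x + y * Complex.I)‖ ^ 2) ≤ ENNReal.ofReal C0)
    (hF1 : ∀ y : ℝ, -μ < y →
      ∫⁻ x in {x : ℝ | r < |x|},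
        ENNReal.ofReal ‖deriv F (x + y * Complex.I)‖ ≤ ENNReal.ofReal C1) :
    ∀ γ : ℝ, max (-𝔯.im) 0 < γ → γ < μ →
      ∃ (p : Polynomial ℂ) (Cc : ℝ), 0 ≤ Cc ∧
        p.natDegree = N - 1 ∧
        p.eval 0 = iteratedDeriv (N - 1) G 𝔯 / (Nat.factorial (N - 1) : ℂ) ∧
        ∀ t : ℝ, 1 ≤ t →
          ‖g t - Complex.exp (-(Complex.I * (t : ℂ) * 𝔯)) * p.eval (t : ℂ)‖ ≤
            Cc * Real.exp (-(γ * t)) := by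
  intro γ _ hγ
  have hgm : g =O[atTop] fun t ↦ Real.exp (m * t) := by
    refine Asymptotics.IsBigO.of_bound M ?_
    filter_upwards [eventually_ge_atTop 0] with t ht
    simpa only [Real.norm_of_nonneg (Real.exp_pos _).le] using hgbound t ht
  obtain ⟨C, hC0, hC⟩ := resonance_expansion_of_laplace_transform_general hgcont hgm h𝔯 hFeq hGdiff
    (fun z hz hz𝔯 ↦ by rw [hFG z hz hz𝔯, div_eq_inv_mul, smul_eq_mul]) ENNReal.ofReal_ne_top
    (by simpa only [ofReal_norm] using hF1) hγ
  refine ⟨resonancePolynomial (polarCoeff G 𝔯 N) N, C, hC0, ?_, ?_, fun t ht ↦ ?_⟩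
  · exact natDegree_resonancePolynomial hN (by simpa [polarCoeff] using hG0)
  · rw [eval_zero_resonancePolynomial _ hN, polarCoeff, Nat.sub_zero, smul_eq_mul, div_eq_inv_mul]
  · simpa only [resonantPart_eq_exp_mul_eval, neg_mul] using hC t (by linarith)
end
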